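/- Any unbounded polynomial class C, i.e., any permutation class with finitely many sum-indecomposable permutations whose dominant growth rate γ equals 1 and whose growth function is unbounded, exhibits a Wilf collapse. -/

import Mathlib

open Filter Asymptotics

/-- A (finite) permutation: a size `n` together with a bijection of `Fin n`,
thought of in one-line notation as the sequence `π 0, π 1, …, π (n-1)`. -/
abbrev PPerm : Type := Σ n : ℕ, Equiv.Perm (Fin n)

/-- Pattern containment: `π ≤ τ` iff `τ` has a subsequence (a strictly increasing choice
of positions) whose entries are in the same relative order as `π`. -/
def PatternLE (π τ : PPerm) : Prop :=
  ∃ g : Fin π.1 → Fin τ.1, StrictMono g ∧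
    ∀ i j : Fin π.1, π.2 i < π.2 j ↔ τ.2 (g i) < τ.2 (g j)

/-- A permutation class: a set of permutations closed downward under containment. -/
def IsPermClass (C : Set PPerm) : Prop :=
  ∀ π τ : PPerm, PatternLE π τ → τ ∈ C → π ∈ C

/-- `cnt C n` is the number `c_n` of permutations of size `n` in `C`. -/
noncomputable def cnt (C : Set PPerm) (n : ℕ) : ℕ :=
  Set.ncard {τ : PPerm | τ ∈ C ∧ τ.1 = n}

/-- The number of permutations of size `n` in `C` avoiding `α`. -/
noncomputable def avcnt (C : Set PPerm) (α : PPerm) (n : ℕ) : ℕ :=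
  Set.ncard {τ : PPerm | τ ∈ C ∧ τ.1 = n ∧ ¬ PatternLE α τ}

/-- `α` and `β` are Wilf-equivalent in `C`: for every `n`, `C` has as many size-`n`
permutations avoiding `α` as avoiding `β`. -/
def WilfEq (C : Set PPerm) (α β : PPerm) : Prop := ∀ n : ℕ, avcnt C α n = avcnt C β n

/-- `wilfcnt C n` is the number `w_n` of Wilf(-equivalence) classes formed by the
size-`n` permutations of `C`. -/
noncomputable def wilfcnt (C : Set PPerm) (n : ℕ) : ℕ :=
  Set.ncard {S : Set PPerm | ∃ α : PPerm, α ∈ C ∧ α.1 = n ∧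
    S = {β : PPerm | β ∈ C ∧ β.1 = n ∧ WilfEq C α β}}

/-- `C` has a *Wilf collapse* if `w_n = o(c_n)`. -/
def WilfCollapse (C : Set PPerm) : Prop :=
  (fun n => (wilfcnt C n : ℝ)) =o[atTop] fun n => (cnt C n : ℝ)

/-- `C` has an *exponential Wilf collapse* if `w_n = o(rⁿ·c_n)` for some `r < 1`. -/
def ExpWilfCollapse (C : Set PPerm) : Prop :=
  ∃ r : ℝ, r < 1 ∧
    (fun n => (wilfcnt C n : ℝ)) =o[atTop] fun n => r ^ n * (cnt C n : ℝ)

/-- The (direct) sum `α ⊕ β` of two permutations: `β` is placed above and to the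
right of `α`. -/
def psum (α β : PPerm) : PPerm :=
  ⟨α.1 + β.1, (finSumFinEquiv.symm.trans ((Equiv.sumCongr α.2 β.2).trans finSumFinEquiv))⟩

/-- A permutation is *sum-indecomposable* if it is nonempty and is not the sum of two
nonempty permutations. -/
def SumIndec (π : PPerm) : Prop :=
  0 < π.1 ∧ ¬ ∃ α β : PPerm, 0 < α.1 ∧ 0 < β.1 ∧ π = psum α β

/-- A set of permutations is *sum-closed* if it is closed under `⊕`. -/
def SumClosed (C : Set PPerm) : Prop :=
  ∀ α β : PPerm, α ∈ C → β ∈ C → psum α β ∈ C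



namespace WC

/-- values of a permutation, extended by the identity. -/
def pv (π : PPerm) (i : ℕ) : ℕ := if h : i < π.1 then (π.2 ⟨i, h⟩).val else i

lemma pv_of_lt (π : PPerm) {i : ℕ} (h : i < π.1) : pv π i = (π.2 ⟨i, h⟩).val := by
  simp [pv, h]

lemma pv_of_ge (π : PPerm) {i : ℕ} (h : π.1 ≤ i) : pv π i = i := by
  simp [pv, Nat.not_lt.mpr h]

lemma pv_lt (π : PPerm) {i : ℕ} (h : i < π.1) : pv π i < π.1 := by
  rw [pv_of_lt π h]; exact (π.2 ⟨i, h⟩).isLt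

lemma pv_inj (π : PPerm) {i j : ℕ} (h : pv π i = pv π j) : i = j := by
  by_cases hi : i < π.1 <;> by_cases hj : j < π.1
  · rw [pv_of_lt π hi, pv_of_lt π hj] at h
    have := π.2.injective (Fin.ext h)
    simpa using this
  · have := pv_lt π hi
    rw [pv_of_ge π (not_lt.mp hj)] at h; omega
  · have := pv_lt π hj
    rw [pv_of_ge π (not_lt.mp hi)] at h; omega
  · rwa [pv_of_ge π (not_lt.mp hi), pv_of_ge π (not_lt.mp hj)] at h

lemma pv_surj (π : PPerm) {v : ℕ} (h : v < π.1) : ∃ i < π.1, pv π i = v := by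
  obtain ⟨i, hi⟩ := π.2.surjective ⟨v, h⟩
  refine ⟨i, i.isLt, ?_⟩
  rw [pv_of_lt π i.isLt]
  simp [hi]

lemma pp_ext {π τ : PPerm} (h : π.1 = τ.1) (hv : ∀ i < π.1, pv π i = pv τ i) : π = τ := by
  obtain ⟨n, p⟩ := π
  obtain ⟨m, q⟩ := τ
  dsimp only at h
  subst h
  congr 1
  ext i
  have := hv i i.isLt
  rw [pv_of_lt _ (show (i:ℕ) < (⟨n, p⟩ : PPerm).1 from i.isLt),
    pv_of_lt _ (show (i:ℕ) < (⟨n, q⟩ : PPerm).1 from i.isLt)] at this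
  simpa using this

@[simp] lemma psum_fst (α β : PPerm) : (psum α β).1 = α.1 + β.1 := rfl

lemma pv_psum_lt (α β : PPerm) {i : ℕ} (h : i < α.1) : pv (psum α β) i = pv α i := by
  have h' : i < (psum α β).1 := by simp; omega
  rw [pv_of_lt _ h', pv_of_lt _ h]
  change (finSumFinEquiv ((Equiv.sumCongr α.2 β.2)
    (finSumFinEquiv.symm (Fin.castAdd β.1 ⟨i, h⟩)))).val = _
  rw [finSumFinEquiv_symm_apply_castAdd]
  simp

lemma pv_psum_ge (α β : PPerm) (i : ℕ) : pv (psum α β) (α.1 + i) = α.1 + pv β i := by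
  by_cases h : i < β.1
  · have h' : α.1 + i < (psum α β).1 := by simp; omega
    rw [pv_of_lt _ h', pv_of_lt _ h]
    change (finSumFinEquiv ((Equiv.sumCongr α.2 β.2)
      (finSumFinEquiv.symm (Fin.natAdd α.1 ⟨i, h⟩)))).val = _
    rw [finSumFinEquiv_symm_apply_natAdd]
    simp
  · rw [pv_of_ge, pv_of_ge]
    · omega
    · simp; omega

lemma pv_psum (α β : PPerm) (i : ℕ) :
    pv (psum α β) i = if i < α.1 then pv α i else α.1 + pv β (i - α.1) := by
  split_ifs with h
  · exact pv_psum_lt α β h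
  · rw [← pv_psum_ge]; congr 1; omega

lemma psum_assoc (α β γ : PPerm) : psum (psum α β) γ = psum α (psum β γ) := by
  apply pp_ext
  · simp; omega
  · intro i hi
    simp only [pv_psum, psum_fst]
    split_ifs <;> first | omega | (rw [Nat.sub_sub]; omega)

/-- the increasing permutation -/
def inc (n : ℕ) : PPerm := ⟨n, Equiv.refl _⟩

@[simp] lemma inc_fst (n : ℕ) : (inc n).1 = n := rfl

@[simp] lemma pv_inc (n i : ℕ) : pv (inc n) i = i := by
  unfold pv
  split_ifs
  · rfl
  · rfl

lemma inc_add (a b : ℕ) : inc (a + b) = psum (inc a) (inc b) := by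
  apply pp_ext
  · simp
  · intro i hi
    simp [pv_psum]; omega

lemma inc_zero_psum (α : PPerm) : psum (inc 0) α = α := by
  apply pp_ext
  · simp
  · intro i hi
    simp [pv_psum]

lemma psum_inc_zero (α : PPerm) : psum α (inc 0) = α := by
  apply pp_ext
  · simp
  · intro i hi
    simp at hi
    simp [pv_psum, hi]

lemma eq_inc_zero {α : PPerm} (h : α.1 = 0) : α = inc 0 := by
  apply pp_ext
  · simpa using h
  · intro i hi; omega

lemma eq_inc_one {α : PPerm} (h : α.1 = 1) : α = inc 1 := by
  apply pp_ext
  · simpa using h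
  · intro i hi
    have := pv_lt α hi
    simp; omega

lemma psum_left_cancel {α β γ : PPerm} (h : psum α β = psum α γ) : β = γ := by
  have h1 : β.1 = γ.1 := by
    have := congrArg (fun x : PPerm => x.1) h
    simp only [psum_fst] at this
    omega
  apply pp_ext h1
  intro i hi
  have := congrArg (fun x : PPerm => pv x (α.1 + i)) h
  simp only [pv_psum_ge] at this
  omega

lemma psum_cancel_size {α β γ δ : PPerm} (h : psum α β = psum γ δ) (hs : α.1 = γ.1) :
    α = γ ∧ β = δ := by
  have h1 : α = γ := by
    apply pp_ext hs
    intro i hi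
    have := congrArg (fun x : PPerm => pv x i) h
    rwa [pv_psum_lt _ _ hi, pv_psum_lt _ _ (hs ▸ hi)] at this
  subst h1
  exact ⟨rfl, psum_left_cancel h⟩

/-- cut a permutation at an invariant prefix -/
lemma exists_cut {τ : PPerm} {k : ℕ} (hk : k ≤ τ.1) (h : ∀ i < k, pv τ i < k) :
    ∃ α β : PPerm, α.1 = k ∧ τ = psum α β := by
  have hinj : Set.InjOn (pv τ) (Finset.range k) := fun a _ b _ hab => pv_inj τ hab
  have himg : (Finset.range k).image (pv τ) = Finset.range k := by
    apply Finset.eq_of_subset_of_card_le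
    · intro x hx
      simp only [Finset.mem_image, Finset.mem_range] at hx ⊢
      obtain ⟨i, hi, rfl⟩ := hx
      exact h i hi
    · rw [Finset.card_image_of_injOn hinj]
  have hge : ∀ i, k ≤ i → k ≤ pv τ i := by
    intro i hi
    by_contra hc
    have : pv τ i ∈ (Finset.range k).image (pv τ) := by
      rw [himg]; simp; omega
    simp only [Finset.mem_image, Finset.mem_range] at this
    obtain ⟨j, hj, hji⟩ := this
    have := pv_inj τ hji
    omega
  let f : Fin k → Fin k := fun i => ⟨pv τ i, h i i.isLt⟩
  have hf : Function.Injective f := by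
    intro a b hab
    simp only [f, Fin.mk.injEq] at hab
    exact Fin.ext (pv_inj τ hab)
  let g : Fin (τ.1 - k) → Fin (τ.1 - k) := fun i => ⟨pv τ (k + i) - k, by
    have := pv_lt τ (show k + i.val < τ.1 by have := i.isLt; omega)
    have := i.isLt
    omega⟩
  have hg : Function.Injective g := by
    intro a b hab
    simp only [g, Fin.mk.injEq] at hab
    have h1 := hge (k + a) (by omega)
    have h2 := hge (k + b) (by omega)
    have := pv_inj τ (show pv τ (k + a) = pv τ (k + b) by omega)
    exact Fin.ext (by omega)
  refine ⟨⟨k, Equiv.ofBijective f (Finite.injective_iff_bijective.mp hf)⟩,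
    ⟨τ.1 - k, Equiv.ofBijective g (Finite.injective_iff_bijective.mp hg)⟩, rfl, ?_⟩
  apply pp_ext
  · simp; omega
  · intro i hi
    rw [pv_psum]
    split_ifs with hik
    · rw [pv_of_lt (⟨k, Equiv.ofBijective f _⟩ : PPerm) hik]
      rfl
    · dsimp only at hik ⊢
      rw [pv_of_lt (⟨τ.1 - k, Equiv.ofBijective g _⟩ : PPerm) (i := i - k) (by dsimp only; omega)]
      have h1 := hge i (by omega)
      simp only [Equiv.ofBijective_apply, g]
      rw [show k + (i - k) = i by omega]
      omega

/-- embeddings with natural-number positions -/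
def Emb (g : ℕ → ℕ) (π τ : PPerm) : Prop :=
  (∀ i j, i < j → j < π.1 → g i < g j) ∧ (∀ i < π.1, g i < τ.1) ∧
    ∀ i j, i < π.1 → j < π.1 → (pv π i < pv π j ↔ pv τ (g i) < pv τ (g j))

lemma patternLE_iff (π τ : PPerm) : PatternLE π τ ↔ ∃ g, Emb g π τ := by
  constructor
  · rintro ⟨g, hg, h⟩
    refine ⟨fun i => if hi : i < π.1 then (g ⟨i, hi⟩).val else 0, ?_, ?_, ?_⟩
    · intro i j hij hj
      have hi : i < π.1 := by omega
      simp only [hi, hj, dif_pos]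
      exact hg (show (⟨i, hi⟩ : Fin π.1) < ⟨j, hj⟩ from hij)
    · intro i hi
      simp only [hi, dif_pos]
      exact (g _).isLt
    · intro i j hi hj
      simp only [hi, hj, dif_pos]
      rw [pv_of_lt _ hi, pv_of_lt _ hj, pv_of_lt _ (g ⟨i, hi⟩).isLt, pv_of_lt _ (g ⟨j, hj⟩).isLt]
      exact h _ _
  · rintro ⟨g, h1, h2, h3⟩
    refine ⟨fun i => ⟨g i, h2 i i.isLt⟩, ?_, ?_⟩
    · intro i j hij
      exact h1 i j hij j.isLt
    · intro i j
      have := h3 i j i.isLt j.isLt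
      rw [pv_of_lt _ i.isLt, pv_of_lt _ j.isLt, pv_of_lt _ (h2 i i.isLt),
        pv_of_lt _ (h2 j j.isLt)] at this
      exact this

lemma ple_refl (π : PPerm) : PatternLE π π := ⟨id, strictMono_id, fun _ _ => Iff.rfl⟩

lemma ple_trans {π σ τ : PPerm} (h1 : PatternLE π σ) (h2 : PatternLE σ τ) : PatternLE π τ := by
  obtain ⟨g, hg, h⟩ := h1
  obtain ⟨g', hg', h'⟩ := h2
  exact ⟨g' ∘ g, hg'.comp hg, fun i j => (h i j).trans (h' _ _)⟩

lemma ple_psum {α α' β β' : PPerm} (h1 : PatternLE α α') (h2 : PatternLE β β') :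
    PatternLE (psum α β) (psum α' β') := by
  rw [patternLE_iff] at *
  obtain ⟨g, a1, a2, a3⟩ := h1
  obtain ⟨g', b1, b2, b3⟩ := h2
  refine ⟨fun i => if i < α.1 then g i else α'.1 + g' (i - α.1), ?_, ?_, ?_⟩
  · intro i j hij hj
    simp only [psum_fst] at hj
    dsimp only
    split_ifs with hi hj'
    · exact a1 i j hij hj'
    · have := a2 i hi; omega
    · omega
    · have := b1 (i - α.1) (j - α.1) (by omega) (by omega); omega
  · intro i hi
    simp only [psum_fst] at hi ⊢
    split_ifs with hi'
    · have := a2 i hi'; omega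
    · have := b2 (i - α.1) (by omega); omega
  · intro i j hi hj
    simp only [psum_fst] at hi hj
    by_cases hi' : i < α.1 <;> by_cases hj' : j < α.1
    · simp only [hi', hj', if_true]
      rw [pv_psum_lt _ _ hi', pv_psum_lt _ _ hj', pv_psum_lt _ _ (a2 i hi'),
        pv_psum_lt _ _ (a2 j hj')]
      exact a3 i j hi' hj'
    · simp only [hi', hj', if_true, if_false]
      rw [pv_psum_lt _ _ hi', pv_psum_lt _ _ (a2 i hi'), pv_psum_ge, pv_psum, if_neg hj']
      have := pv_lt α hi'
      have := pv_lt α' (a2 i hi')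
      omega
    · simp only [hi', hj', if_true, if_false]
      rw [pv_psum_lt _ _ hj', pv_psum_lt _ _ (a2 j hj'), pv_psum_ge, pv_psum, if_neg hi']
      have := pv_lt α hj'
      have := pv_lt α' (a2 j hj')
      omega
    · simp only [hi', hj', if_false]
      rw [pv_psum_ge, pv_psum_ge, pv_psum, pv_psum, if_neg hi', if_neg hj']
      have := b3 (i - α.1) (j - α.1) (by omega) (by omega)
      omega

lemma ple_zero (α : PPerm) : PatternLE (inc 0) α := by
  rw [patternLE_iff]
  exact ⟨id, by simp, by simp, by simp⟩

lemma ple_psum_left (α β : PPerm) : PatternLE α (psum α β) := by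
  have := ple_psum (ple_refl α) (ple_zero β)
  rwa [psum_inc_zero] at this

lemma ple_psum_right (α β : PPerm) : PatternLE β (psum α β) := by
  have := ple_psum (ple_zero α) (ple_refl β)
  rwa [inc_zero_psum] at this

lemma ple_inc {a b : ℕ} (h : a ≤ b) : PatternLE (inc a) (inc b) := by
  obtain ⟨c, rfl⟩ := Nat.exists_eq_add_of_le h
  rw [inc_add]; exact ple_psum_left _ _

/-- splitting an embedding at a matched singleton component -/
lemma emb_split {g : ℕ → ℕ} {α₁ α₂ τ₁ τ₂ : PPerm}
    (h : Emb g (psum α₁ (psum (inc 1) α₂)) (psum τ₁ (psum (inc 1) τ₂))) (hx : g α₁.1 = τ₁.1) :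
    PatternLE α₁ τ₁ ∧ PatternLE α₂ τ₂ := by
  obtain ⟨h1, h2, h3⟩ := h
  simp only [psum_fst, inc_fst] at h1 h2 h3
  rw [patternLE_iff, patternLE_iff]
  constructor
  · refine ⟨g, fun i j hij hj => h1 i j hij (by omega), ?_, ?_⟩
    · intro i hi
      have := h1 i α₁.1 hi (by omega); omega
    · intro i j hi hj
      have hi' := h1 i α₁.1 hi (by omega)
      have hj' := h1 j α₁.1 hj (by omega)
      have := h3 i j (by omega) (by omega)
      rw [pv_psum_lt _ _ hi, pv_psum_lt _ _ hj, pv_psum_lt _ _ (by omega),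
        pv_psum_lt _ _ (by omega)] at this
      exact this
  · have key : ∀ i < α₂.1, τ₁.1 + 1 ≤ g (α₁.1 + 1 + i) := by
      intro i hi
      have := h1 α₁.1 (α₁.1 + 1 + i) (by omega) (by omega)
      omega
    refine ⟨fun i => g (α₁.1 + 1 + i) - (τ₁.1 + 1), ?_, ?_, ?_⟩
    · intro i j hij hj
      have := key i (by omega)
      have := key j hj
      have := h1 (α₁.1 + 1 + i) (α₁.1 + 1 + j) (by omega) (by omega)
      dsimp only
      omega
    · intro i hi
      have := key i hi
      have := h2 (α₁.1 + 1 + i) (by omega)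
      dsimp only
      omega
    · intro i j hi hj
      have ki := key i hi
      have kj := key j hj
      have := h3 (α₁.1 + 1 + i) (α₁.1 + 1 + j) (by omega) (by omega)
      have e : ∀ (a b : PPerm) (k : ℕ), a.1 + 1 ≤ k →
          pv (psum a (psum (inc 1) b)) k = a.1 + 1 + pv b (k - (a.1 + 1)) := by
        intro a b k hk
        rw [pv_psum, if_neg (by omega), pv_psum, if_neg (by simp; omega)]
        simp only [inc_fst]
        rw [show k - a.1 - 1 = k - (a.1 + 1) by omega]; omega
      rw [e _ _ _ (by omega), e _ _ _ (by omega), e _ _ _ ki, e _ _ _ kj] at this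
      simp only [Nat.add_sub_cancel_left] at this
      dsimp only
      omega

end WC


namespace WC

/-- the shifted sequence -/
def sh (c : ℕ → ℕ) : ℕ → ℕ := fun i => c (i + 1)

lemma sh_update_succ (c : ℕ → ℕ) (l v : ℕ) :
    sh (Function.update c (l + 1) v) = Function.update (sh c) l v := by
  funext i
  simp only [sh, Function.update_apply]
  simp

lemma sh_update_zero (c : ℕ → ℕ) (v : ℕ) : sh (Function.update c 0 v) = sh c := by
  funext i
  simp [sh]

/-- the permutation `1^{c 0} s₁ 1^{c 1} s₂ ⋯`. -/
def ev : List PPerm → (ℕ → ℕ) → PPerm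
  | [], c => inc (c 0)
  | x :: s, c => psum (inc (c 0)) (psum x (ev s (sh c)))

/-- nontrivial sum-indecomposables -/
def NT (x : PPerm) : Prop := SumIndec x ∧ 2 ≤ x.1

lemma NT_cut {x : PPerm} (hx : NT x) {k : ℕ} (h0 : 0 < k) (hk : k < x.1) :
    ∃ i < k, k ≤ pv x i := by
  by_contra hc
  push Not at hc
  obtain ⟨α, β, h1, h2⟩ := exists_cut hk.le hc
  apply hx.1.2
  refine ⟨α, β, by omega, ?_, h2⟩
  have := congrArg (fun x : PPerm => x.1) h2
  simp at this
  omega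

lemma NT_inv {x : PPerm} (hx : NT x) : ∃ i j, i < j ∧ j < x.1 ∧ pv x j < pv x i := by
  obtain ⟨i, hi, h⟩ := NT_cut hx (k := 1) (by omega) (by have := hx.2; omega)
  have hi0 : i = 0 := by omega
  subst hi0
  obtain ⟨j, hj, hj0⟩ := pv_surj x (v := 0) (by have := hx.2; omega)
  refine ⟨0, j, ?_, hj, by omega⟩
  rcases Nat.eq_zero_or_pos j with rfl | h'
  · omega
  · exact h'

lemma ev_congr : ∀ (s : List PPerm) (c c' : ℕ → ℕ), (∀ i ≤ s.length, c i = c' i) →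
    ev s c = ev s c'
  | [], c, c', h => by simp [ev, h 0 (by simp)]
  | x :: s, c, c', h => by
    simp only [ev]
    rw [h 0 (by simp), ev_congr s (sh c) (sh c') (fun i hi => h (i + 1) (by simp; omega))]

/-- sum of sizes of a skeleton -/
def sz (s : List PPerm) : ℕ := (s.map (fun x => x.1)).sum

lemma ev_fst : ∀ (s : List PPerm) (c : ℕ → ℕ),
    (ev s c).1 = (∑ i ∈ Finset.range (s.length + 1), c i) + sz s
  | [], c => by simp [ev, sz]
  | x :: s, c => by
    simp only [ev, psum_fst, inc_fst, ev_fst s (sh c)]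
    rw [List.length_cons, Finset.sum_range_succ' c]
    simp only [sh, sz, List.map_cons, List.sum_cons]
    omega

lemma ev_mono : ∀ (s : List PPerm) (c c' : ℕ → ℕ), (∀ i ≤ s.length, c i ≤ c' i) →
    PatternLE (ev s c) (ev s c')
  | [], c, c', h => ple_inc (h 0 (by simp))
  | x :: s, c, c', h => ple_psum (ple_inc (h 0 (by simp))) (ple_psum (ple_refl _)
      (ev_mono s _ _ (fun i hi => h (i + 1) (by simp; omega))))

lemma ev_mem : ∀ (s : List PPerm) (c : ℕ → ℕ) (x : PPerm), x ∈ s → PatternLE x (ev s c)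
  | [], c, x, h => by simp at h
  | y :: s, c, x, h => by
    rcases List.mem_cons.mp h with rfl | h
    · exact ple_trans (ple_psum_left _ _) (ple_psum_right _ _)
    · exact ple_trans (ple_trans (ev_mem s (sh c) x h) (ple_psum_right _ _)) (ple_psum_right _ _)

/-- being representable as a word -/
def Rep (τ : PPerm) : Prop :=
  ∃ s c, (∀ x ∈ s, NT x) ∧ τ = ev s c ∧ ∀ i, s.length < i → c i = 0

lemma rep_psum_aux : ∀ (n : ℕ) (τ : PPerm), τ.1 = n → ∀ σ, Rep σ → Rep (psum τ σ) := by
  intro n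
  induction n using Nat.strong_induction_on with
  | _ n ih =>
    intro τ hτ σ hσ
    rcases Nat.eq_zero_or_pos τ.1 with h0 | hpos
    · rw [eq_inc_zero h0, inc_zero_psum]; exact hσ
    by_cases hi : SumIndec τ
    · obtain ⟨s, c, hs, rfl, hc⟩ := hσ
      by_cases h1 : τ.1 = 1
      · rw [eq_inc_one h1]
        refine ⟨s, Function.update c 0 (1 + c 0), hs, ?_, ?_⟩
        · cases s with
          | nil => simp [ev, inc_add]
          | cons x s =>
            simp only [ev, sh_update_zero, Function.update_self]
            rw [inc_add, psum_assoc]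
        · intro i hi
          rw [Function.update_of_ne (by omega)]
          exact hc i hi
      · refine ⟨τ :: s, fun i => if i = 0 then 0 else c (i - 1), ?_, ?_, ?_⟩
        · intro x hx
          rcases List.mem_cons.mp hx with rfl | hx
          · exact ⟨hi, by omega⟩
          · exact hs x hx
        · simp only [ev, if_true]
          rw [inc_zero_psum]
          congr 1
        · intro i hi
          simp only [List.length_cons] at hi
          simp only [show i ≠ 0 by omega, if_false]
          exact hc _ (by omega)
    · have : ∃ α β : PPerm, 0 < α.1 ∧ 0 < β.1 ∧ τ = psum α β := by
        by_contra hc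
        exact hi ⟨hpos, hc⟩
      obtain ⟨α, β, ha, hb, rfl⟩ := this
      simp only [psum_fst] at hτ
      rw [psum_assoc]
      exact ih α.1 (by omega) α rfl _ (ih β.1 (by omega) β rfl _ hσ)

lemma exists_rep (τ : PPerm) : Rep τ := by
  have h : Rep (psum τ (inc 0)) := by
    refine rep_psum_aux _ τ rfl _ ⟨[], fun _ => 0, by simp, rfl, by simp⟩
  rwa [psum_inc_zero] at h

lemma NT_psum_eq {x y a b : PPerm} (hx : NT x) (hy : NT y) (h : psum x a = psum y b) :
    x = y ∧ a = b := by
  have key : ∀ {x y a b : PPerm}, NT x → NT y → psum x a = psum y b → ¬ x.1 < y.1 := by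
    intro x y a b hx hy h hlt
    obtain ⟨i, hi, hi'⟩ := NT_cut hy (k := x.1) (by have := hx.2; omega) hlt
    have := congrArg (fun z : PPerm => pv z i) h
    rw [pv_psum_lt _ _ hi, pv_psum_lt _ _ (by omega)] at this
    have := pv_lt x hi
    omega
  exact psum_cancel_size h (le_antisymm (not_lt.mp (key hy hx h.symm)) (not_lt.mp (key hx hy h)))

lemma NT_inc_absurd {x a b : PPerm} {k : ℕ} (hx : NT x) (hk : 0 < k)
    (h : psum x a = psum (inc k) b) : False := by
  have h2 := hx.2
  obtain ⟨i, hi, hi'⟩ := NT_cut hx (k := 1) (by omega) (by omega)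
  have := congrArg (fun z : PPerm => pv z i) h
  rw [pv_psum_lt _ _ (by omega), pv_psum_lt _ _ (by simp; omega), pv_inc] at this
  omega

lemma ev_inj : ∀ (s s' : List PPerm) (c c' : ℕ → ℕ), (∀ x ∈ s, NT x) → (∀ x ∈ s', NT x) →
    ev s c = ev s' c' → s = s' ∧ ∀ i ≤ s.length, c i = c' i
  | [], [], c, c', _, _, h => by
    refine ⟨rfl, ?_⟩
    intro i hi
    simp at hi
    subst hi
    exact congrArg (fun x : PPerm => x.1) h
  | [], y :: s', c, c', _, h', h => by
    exfalso
    have h1 := congrArg (fun x : PPerm => x.1) h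
    have hy := h' y (by simp)
    have h2 := hy.2
    simp only [ev, psum_fst, inc_fst] at h1
    simp only [ev] at h
    rw [show c 0 = c' 0 + (c 0 - c' 0) by omega, inc_add] at h
    have h3 := psum_left_cancel h
    refine NT_inc_absurd (a := ev s' (sh c')) (b := inc 0) hy (k := c 0 - c' 0) (by omega) ?_
    rw [psum_inc_zero]; exact h3.symm
  | y :: s, [], c, c', h', _, h => by
    exfalso
    have h1 := congrArg (fun x : PPerm => x.1) h
    have hy := h' y (by simp)
    have h2 := hy.2
    simp only [ev, psum_fst, inc_fst] at h1
    simp only [ev] at h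
    rw [show c' 0 = c 0 + (c' 0 - c 0) by omega, inc_add] at h
    have h3 := psum_left_cancel h
    refine NT_inc_absurd (a := ev s (sh c)) (b := inc 0) hy (k := c' 0 - c 0) (by omega) ?_
    rw [psum_inc_zero]; exact h3
  | x :: s, y :: s', c, c', hs, hs', h => by
    have hx := hs x (by simp)
    have hy := hs' y (by simp)
    simp only [ev] at h
    have h0 : c 0 = c' 0 := by
      rcases lt_trichotomy (c 0) (c' 0) with hl | he | hg
      · exfalso
        rw [show c' 0 = c 0 + (c' 0 - c 0) by omega, inc_add, psum_assoc] at h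
        exact NT_inc_absurd hx (by omega) (psum_left_cancel h)
      · exact he
      · exfalso
        rw [show c 0 = c' 0 + (c 0 - c' 0) by omega, inc_add, psum_assoc] at h
        exact NT_inc_absurd hy (by omega) (psum_left_cancel h).symm
    rw [h0] at h
    obtain ⟨h1, h2⟩ := NT_psum_eq hx hy (psum_left_cancel h)
    obtain ⟨h3, h4⟩ := ev_inj s s' (sh c) (sh c') (fun z hz => hs z (by simp [hz]))
      (fun z hz => hs' z (by simp [hz])) h2
    refine ⟨by rw [h1, h3], ?_⟩
    intro i hi
    cases i with
    | zero => exact h0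
    | succ i => exact h4 i (by simpa using hi)

/-- position `x` belongs to the `l`-th run of ones. -/
def InRun : List PPerm → (ℕ → ℕ) → ℕ → ℕ → Prop
  | _, c, 0, x => x < c 0
  | [], _, _ + 1, _ => False
  | y :: s, c, l + 1, x => c 0 + y.1 ≤ x ∧ InRun s (sh c) l (x - (c 0 + y.1))

lemma inRun_split : ∀ (s : List PPerm) (c : ℕ → ℕ) (l x : ℕ), InRun s c l x →
    ∃ τ₁ τ₂ : PPerm, τ₁.1 = x ∧ ev s c = psum τ₁ (psum (inc 1) τ₂) ∧
      ev s (Function.update c l (c l + 1)) = psum τ₁ (psum (inc 1) (psum (inc 1) τ₂)) ∧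
      ev s (Function.update c l (c l - 1)) = psum τ₁ τ₂
  | [], c, 0, x, h => by
    simp only [InRun] at h
    refine ⟨inc x, inc (c 0 - 1 - x), rfl, ?_, ?_, ?_⟩ <;>
      simp only [ev, Function.update_self, ← inc_add] <;> congr 1 <;> omega
  | y :: s, c, 0, x, h => by
    simp only [InRun] at h
    refine ⟨inc x, psum (inc (c 0 - 1 - x)) (psum y (ev s (sh c))), rfl, ?_, ?_, ?_⟩ <;>
      simp only [ev, Function.update_self, sh_update_zero, ← psum_assoc, ← inc_add] <;>
      congr 3 <;> omega
  | [], c, l + 1, x, h => by simp [InRun] at h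
  | y :: s, c, l + 1, x, h => by
    simp only [InRun] at h
    obtain ⟨t1, t2, h1, h2, h3, h4⟩ := inRun_split s (sh c) l _ h.2
    refine ⟨psum (inc (c 0)) (psum y t1), t2, ?_, ?_, ?_, ?_⟩
    · simp only [psum_fst, inc_fst]; omega
    · simp only [ev, psum_assoc, h2]
    · simp only [ev, psum_assoc, sh_update_succ, ← h3]
      simp [sh]
    · simp only [ev, psum_assoc, sh_update_succ, ← h4]
      simp [sh]

lemma inRun_pv {s : List PPerm} {c : ℕ → ℕ} {l x : ℕ} (h : InRun s c l x) :
    pv (ev s c) x = x ∧ x < (ev s c).1 := by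
  obtain ⟨t1, t2, rfl, h2, _⟩ := inRun_split s c l x h
  rw [h2]
  refine ⟨?_, by simp⟩
  have := pv_psum_ge t1 (psum (inc 1) t2) 0
  rw [Nat.add_zero, pv_psum_lt (inc 1) t2 (by simp), pv_inc] at this
  simpa using this

lemma inRun_ico : ∀ (s : List PPerm) (c : ℕ → ℕ) (l : ℕ), l ≤ s.length →
    ∃ b, ∀ x, InRun s c l x ↔ b ≤ x ∧ x < b + c l
  | s, c, 0, _ => ⟨0, fun x => by simp [InRun]⟩
  | [], c, l + 1, h => by simp at h
  | y :: s, c, l + 1, h => by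
    obtain ⟨b, hb⟩ := inRun_ico s (sh c) l (by simpa using h)
    refine ⟨c 0 + y.1 + b, fun x => ?_⟩
    simp only [InRun, hb]
    simp only [sh]
    omega

lemma inRun_le : ∀ {s : List PPerm} {c : ℕ → ℕ} {l x : ℕ}, InRun s c l x → l ≤ s.length
  | _, c, 0, _, _ => by simp
  | [], c, l + 1, x, h => by simp [InRun] at h
  | y :: s, c, l + 1, x, h => by
    have := inRun_le h.2
    simpa using this

lemma inRun_inv : ∀ (s : List PPerm) (c : ℕ → ℕ) (j j' x x' : ℕ), (∀ y ∈ s, NT y) →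
    InRun s c j x → InRun s c j' x' → j < j' →
    ∃ y y', x < y ∧ y < y' ∧ y' < x' ∧ pv (ev s c) y' < pv (ev s c) y
  | [], c, j, j' + 1, x, x', _, _, h', _ => by simp [InRun] at h'
  | _, c, j, 0, x, x', _, _, _, hj => by omega
  | z :: s, c, 0, j' + 1, x, x', hs, h, h', _ => by
    simp only [InRun] at h h'
    obtain ⟨p, q, hpq, hq, hv⟩ := NT_inv (hs z (by simp))
    refine ⟨c 0 + p, c 0 + q, by omega, by omega, by omega, ?_⟩
    have e : ∀ k < z.1, pv (ev (z :: s) c) (c 0 + k) = c 0 + pv z k := by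
      intro k hk
      have := pv_psum_ge (inc (c 0)) (psum z (ev s (sh c))) k
      rw [pv_psum_lt _ _ hk] at this
      exact this
    rw [e _ hq, e _ (by omega)]
    omega
  | z :: s, c, j + 1, j' + 1, x, x', hs, h, h', hj => by
    simp only [InRun] at h h'
    obtain ⟨y, y', h1, h2, h3, h4⟩ := inRun_inv s (sh c) j j' _ _
      (fun w hw => hs w (by simp [hw])) h.2 h'.2 (by omega)
    have e : ∀ k, pv (ev (z :: s) c) (c 0 + z.1 + k) = c 0 + z.1 + pv (ev s (sh c)) k := by
      intro k
      have h1 := pv_psum_ge (inc (c 0)) (psum z (ev s (sh c))) (z.1 + k)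
      rw [pv_psum_ge z, inc_fst, ← add_assoc, ← add_assoc] at h1
      exact h1
    refine ⟨c 0 + z.1 + y, c 0 + z.1 + y', by omega, by omega, by omega, ?_⟩
    rw [e, e]
    omega

lemma bad_positions (M : ℕ) : ∀ (s : List PPerm) (c : ℕ → ℕ),
    ∃ F : Finset ℕ, F.card ≤ sz s + (s.length + 1) * M ∧
      ∀ x < (ev s c).1, x ∈ F ∨ ∃ l ≤ s.length, M ≤ c l ∧ InRun s c l x
  | [], c => by
    by_cases h : M ≤ c 0
    · refine ⟨∅, by simp, fun x hx => Or.inr ⟨0, by simp, h, ?_⟩⟩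
      simpa [InRun, ev] using hx
    · refine ⟨Finset.range M, by simp, fun x hx => Or.inl ?_⟩
      simp only [ev, inc_fst] at hx
      simp; omega
  | y :: s, c => by
    obtain ⟨F, hF, hF'⟩ := bad_positions M s (sh c)
    let F0 : Finset ℕ := if M ≤ c 0 then ∅ else Finset.range (c 0)
    have hF0 : F0.card ≤ M := by
      simp only [F0]
      split_ifs
      · simp
      · simp; omega
    refine ⟨(F0 ∪ Finset.Ico (c 0) (c 0 + y.1)) ∪ F.image (fun z => c 0 + y.1 + z), ?_, ?_⟩
    · have h1 := Finset.card_union_le (F0 ∪ Finset.Ico (c 0) (c 0 + y.1))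
        (F.image (fun z => c 0 + y.1 + z))
      have h2 := Finset.card_union_le F0 (Finset.Ico (c 0) (c 0 + y.1))
      have h3 := Finset.card_image_le (s := F) (f := fun z => c 0 + y.1 + z)
      simp only [Nat.card_Ico] at h2
      have e : sz (y :: s) = y.1 + sz s := by simp [sz]
      rw [e, List.length_cons, Nat.succ_mul]
      omega
    · intro x hx
      simp only [ev, psum_fst, inc_fst] at hx
      by_cases hx0 : x < c 0
      · by_cases hM : M ≤ c 0
        · right
          exact ⟨0, by simp, hM, by simpa [InRun] using hx0⟩
        · left
          simp [F0, hM, hx0]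
      by_cases hx1 : x < c 0 + y.1
      · left
        simp only [Finset.mem_union, Finset.mem_Ico]
        left; right; omega
      · rcases hF' (x - (c 0 + y.1)) (by omega) with h | ⟨l, hl, hM, hr⟩
        · left
          simp only [Finset.mem_union, Finset.mem_image]
          right
          exact ⟨_, h, by omega⟩
        · right
          refine ⟨l + 1, by simpa using hl, hM, ?_⟩
          simp only [InRun]
          exact ⟨by omega, hr⟩

end WC


namespace WC

/-- indices of long runs -/
def LL (M : ℕ) (s : List PPerm) (c : ℕ → ℕ) : Finset ℕ :=
  (Finset.range (s.length + 1)).filter (fun l => M ≤ c l)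

lemma mem_LL {M : ℕ} {s : List PPerm} {c : ℕ → ℕ} {l : ℕ} :
    l ∈ LL M s c ↔ l ≤ s.length ∧ M ≤ c l := by
  simp [LL]

lemma LL_anti {M M' : ℕ} (h : M ≤ M') (s : List PPerm) (c : ℕ → ℕ) : LL M' s c ⊆ LL M s c := by
  intro l hl
  rw [mem_LL] at *
  exact ⟨hl.1, by omega⟩

lemma LL_congr {M : ℕ} {s : List PPerm} {c c' : ℕ → ℕ} (h : ∀ i ≤ s.length, c i = c' i) :
    LL M s c = LL M s c' := by
  ext l
  rw [mem_LL, mem_LL]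
  constructor
  · rintro ⟨h1, h2⟩; exact ⟨h1, h l h1 ▸ h2⟩
  · rintro ⟨h1, h2⟩; exact ⟨h1, (h l h1).symm ▸ h2⟩

lemma key_map {g : ℕ → ℕ} {r s : List PPerm} {a c : ℕ → ℕ} {M Q : ℕ}
    (hr : ∀ x ∈ r, NT x) (hs : ∀ x ∈ s, NT x) (hQ : sz s + (s.length + 1) * M ≤ Q)
    (h : Emb g (ev r a) (ev s c)) :
    ∃ φ : ℕ → ℕ, StrictMonoOn φ (LL (Q + 1) r a) ∧
      ∀ j ∈ LL (Q + 1) r a, φ j ∈ LL M s c ∧ ∃ x, InRun r a j x ∧ InRun s c (φ j) (g x) := by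
  obtain ⟨F, hF, hF'⟩ := bad_positions M s c
  obtain ⟨h1, h2, h3⟩ := h
  have ex : ∀ j ∈ LL (Q + 1) r a, ∃ l x, l ∈ LL M s c ∧ InRun r a j x ∧ InRun s c l (g x) := by
    intro j hj
    rw [mem_LL] at hj
    obtain ⟨b, hb⟩ := inRun_ico r a j hj.1
    by_contra hc
    push Not at hc
    have hsub : (Finset.Ico b (b + a j)).image g ⊆ F := by
      intro y hy
      simp only [Finset.mem_image, Finset.mem_Ico] at hy
      obtain ⟨x, hx, rfl⟩ := hy
      have hx' := (hb x).mpr hx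
      rcases hF' (g x) (h2 x (inRun_pv hx').2) with h | ⟨l, hl, hM, hl'⟩
      · exact h
      · exact absurd hl' (hc l x (mem_LL.mpr ⟨hl, hM⟩) hx')
    have hcard := Finset.card_le_card hsub
    rw [Finset.card_image_of_injOn] at hcard
    · simp at hcard
      omega
    · intro x hx y hy hxy
      simp only [Finset.coe_Ico, Set.mem_Ico] at hx hy
      have hx' := (inRun_pv ((hb x).mpr hx)).2
      have hy' := (inRun_pv ((hb y).mpr hy)).2
      rcases lt_trichotomy x y with hl | he | hg
      · have := h1 x y hl hy'; omega
      · exact he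
      · have := h1 y x hg hx'; omega
  choose! φ ψ hφ1 hφ2 hφ3 using ex
  refine ⟨φ, ?_, fun j hj => ⟨hφ1 j hj, ψ j, hφ2 j hj, hφ3 j hj⟩⟩
  intro j hj j' hj' hlt
  have hj : j ∈ LL (Q + 1) r a := hj
  have hj' : j' ∈ LL (Q + 1) r a := hj'
  obtain ⟨y, y', e1, e2, e3, e4⟩ := inRun_inv r a j j' _ _ hr (hφ2 j hj) (hφ2 j' hj') hlt
  have hsz := (inRun_pv (hφ2 j' hj')).2
  have g1 := h1 _ _ e1 (by omega)
  have g2 := h1 _ _ e2 (by omega)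
  have g3 := h1 _ _ e3 (by omega)
  have g4 := (h3 y' y (by omega) (by omega)).mp e4
  by_contra hc
  rcases Nat.eq_or_lt_of_le (not_lt.mp hc) with he | hl
  · obtain ⟨b, hb⟩ := inRun_ico s c (φ j) (mem_LL.mp (hφ1 j hj)).1
    have k1 := hφ3 j hj
    have k2 := hφ3 j' hj'
    rw [he] at k2
    rw [hb] at k1 k2
    have k3 := inRun_pv ((hb (g y)).mpr (by omega))
    have k4 := inRun_pv ((hb (g y')).mpr (by omega))
    rw [k3.1, k4.1] at g4
    omega
  · obtain ⟨z, z', f1, f2, f3, _⟩ := inRun_inv s c _ _ _ _ hs (hφ3 j' hj') (hφ3 j hj) hl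
    omega

/-- order-invariant selectors of an element of a finite set -/
def IsSel (σ : Finset ℕ → ℕ) : Prop :=
  (∀ J : Finset ℕ, J.Nonempty → σ J ∈ J) ∧
  ∀ (J : Finset ℕ) (φ : ℕ → ℕ), J.Nonempty → StrictMonoOn φ J → σ (J.image φ) = φ (σ J)

/-- minimum -/
def lo (J : Finset ℕ) : ℕ := if h : J.Nonempty then J.min' h else 0
/-- maximum -/
def hi (J : Finset ℕ) : ℕ := if h : J.Nonempty then J.max' h else 0

lemma isSel_lo : IsSel lo := by
  have hm : ∀ J : Finset ℕ, J.Nonempty → lo J ∈ J := by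
    intro J hJ; simp only [lo, hJ, dif_pos]; exact J.min'_mem hJ
  have hl : ∀ (J : Finset ℕ) (x : ℕ), x ∈ J → lo J ≤ x := by
    intro J x hx; have hJ : J.Nonempty := ⟨x, hx⟩
    simp only [lo, hJ, dif_pos]; exact J.min'_le x hx
  refine ⟨hm, fun J φ hJ hφ => ?_⟩
  apply le_antisymm
  · exact hl _ _ (Finset.mem_image_of_mem _ (hm J hJ))
  · obtain ⟨y, hy, he⟩ := Finset.mem_image.mp (hm (J.image φ) (hJ.image φ))
    rw [← he]
    exact hφ.monotoneOn (hm J hJ) hy (hl J y hy)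

lemma isSel_hi : IsSel hi := by
  have hm : ∀ J : Finset ℕ, J.Nonempty → hi J ∈ J := by
    intro J hJ; simp only [hi, hJ, dif_pos]; exact J.max'_mem hJ
  have hl : ∀ (J : Finset ℕ) (x : ℕ), x ∈ J → x ≤ hi J := by
    intro J x hx; have hJ : J.Nonempty := ⟨x, hx⟩
    simp only [hi, hJ, dif_pos]; exact J.le_max' x hx
  refine ⟨hm, fun J φ hJ hφ => ?_⟩
  apply le_antisymm
  · obtain ⟨y, hy, he⟩ := Finset.mem_image.mp (hm (J.image φ) (hJ.image φ))
    rw [← he]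
    exact hφ.monotoneOn hy (hm J hJ) (hl J y hy)
  · exact hl _ _ (Finset.mem_image_of_mem _ (hm J hJ))

lemma lo_ne_hi {J : Finset ℕ} (h : 2 ≤ J.card) : lo J ≠ hi J := by
  have hJ : J.Nonempty := by rw [← Finset.card_pos]; omega
  simp only [lo, hi, hJ, dif_pos]
  exact (J.min'_lt_max'_of_card (by omega)).ne

lemma key_sel {g : ℕ → ℕ} {r s : List PPerm} {a c : ℕ → ℕ} {M Q d : ℕ}
    (hr : ∀ x ∈ r, NT x) (hs : ∀ x ∈ s, NT x) (hQ : sz s + (s.length + 1) * M ≤ Q)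
    (h : Emb g (ev r a) (ev s c)) (hd0 : 0 < d) (hJ : (LL (Q + 1) r a).card = d)
    (hL : (LL M s c).card ≤ d) :
    (LL M s c).card = d ∧ ∃ φ : ℕ → ℕ, StrictMonoOn φ (LL (Q + 1) r a) ∧
      ∀ σ, IsSel σ → σ (LL M s c) = φ (σ (LL (Q + 1) r a)) ∧
      ∃ x, InRun r a (σ (LL (Q + 1) r a)) x ∧ InRun s c (σ (LL M s c)) (g x) := by
  obtain ⟨φ, h1, h2⟩ := key_map hr hs hQ h
  have hsub : (LL (Q + 1) r a).image φ ⊆ LL M s c := by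
    intro y hy
    obtain ⟨j, hj, rfl⟩ := Finset.mem_image.mp hy
    exact (h2 j hj).1
  have hcard : ((LL (Q + 1) r a).image φ).card = d := by
    rw [Finset.card_image_of_injOn h1.injOn, hJ]
  have heq := Finset.eq_of_subset_of_card_le hsub (by omega)
  refine ⟨by rw [← heq, hcard], φ, h1, fun σ hσ => ?_⟩
  have hne : (LL (Q + 1) r a).Nonempty := by rw [← Finset.card_pos]; omega
  have e : σ (LL M s c) = φ (σ (LL (Q + 1) r a)) := by
    rw [← heq]; exact hσ.2 _ _ hne h1
  refine ⟨e, ?_⟩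
  rw [e]
  exact (h2 _ (hσ.1 _ hne)).2

/-- increase / decrease one coordinate -/
def up (c : ℕ → ℕ) (l : ℕ) : ℕ → ℕ := Function.update c l (c l + 1)
/-- decrease one coordinate -/
def dn (c : ℕ → ℕ) (l : ℕ) : ℕ → ℕ := Function.update c l (c l - 1)

lemma up_apply (c : ℕ → ℕ) (l i : ℕ) : up c l i = if i = l then c i + 1 else c i := by
  simp only [up, Function.update_apply]
  split_ifs with h
  · rw [h]
  · rfl

lemma dn_apply (c : ℕ → ℕ) (l i : ℕ) : dn c l i = if i = l then c i - 1 else c i := by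
  simp only [dn, Function.update_apply]
  split_ifs with h
  · rw [h]
  · rfl

lemma ev_up_fst {s : List PPerm} {c : ℕ → ℕ} {l x : ℕ} (h : InRun s c l x) :
    (ev s (up c l)).1 = (ev s c).1 + 1 := by
  obtain ⟨t1, t2, _, h1, h2, h3⟩ := inRun_split s c l x h
  rw [up, h1, h2]; simp; omega

lemma ev_dn_fst {s : List PPerm} {c : ℕ → ℕ} {l x : ℕ} (h : InRun s c l x) :
    (ev s (dn c l)).1 + 1 = (ev s c).1 := by
  obtain ⟨t1, t2, _, h1, h2, h3⟩ := inRun_split s c l x h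
  rw [dn, h1, h3]; simp; omega

lemma emb_up_dn {g : ℕ → ℕ} {r s : List PPerm} {a c : ℕ → ℕ} {j l x : ℕ}
    (h : Emb g (ev r a) (ev s c)) (hj : InRun r a j x) (hl : InRun s c l (g x)) :
    PatternLE (ev r (up a j)) (ev s (up c l)) ∧ PatternLE (ev r (dn a j)) (ev s (dn c l)) := by
  obtain ⟨a1, a2, ha, ha1, ha2, ha3⟩ := inRun_split r a j x hj
  obtain ⟨t1, t2, ht, ht1, ht2, ht3⟩ := inRun_split s c l _ hl
  rw [ha1, ht1] at h
  obtain ⟨h1, h2⟩ := emb_split h (by rw [ha, ht])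
  simp only [up, dn]
  rw [ha2, ha3, ht2, ht3]
  exact ⟨ple_psum h1 (ple_psum (ple_refl _) (ple_psum (ple_refl _) h2)), ple_psum h1 h2⟩

/-- The standing hypotheses on the class. -/
structure Setup (C : Set PPerm) (N d Q : ℕ) : Prop where
  cap : ∀ s c c', (∀ x ∈ s, NT x) → (∀ i ≤ s.length, min (c i) N = min (c' i) N) →
    ev s c ∈ C → ev s c' ∈ C
  card_le : ∀ s c, (∀ x ∈ s, NT x) → ev s c ∈ C → (LL N s c).card ≤ d
  size_le : ∀ s c, (∀ x ∈ s, NT x) → ev s c ∈ C → sz s + (s.length + 1) * (N + 1) ≤ Q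

/-- the moved sequence -/
def mv (c : ℕ → ℕ) (l l' : ℕ) : ℕ → ℕ := up (dn c l) l'

lemma mv_apply (c : ℕ → ℕ) {l l' : ℕ} (hne : l ≠ l') (i : ℕ) :
    mv c l l' i = if i = l then c i - 1 else if i = l' then c i + 1 else c i := by
  simp only [mv, up_apply, dn_apply]
  split_ifs <;> omega

lemma LL_dn {M : ℕ} {s : List PPerm} {c : ℕ → ℕ} {l : ℕ} (h : M < c l) :
    LL M s (dn c l) = LL M s c := by
  ext i
  simp only [mem_LL, dn_apply]
  split_ifs with hi
  · subst hi; omega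
  · rfl

lemma LL_up {M : ℕ} {s : List PPerm} {c : ℕ → ℕ} {l : ℕ} (h : M ≤ c l) :
    LL M s (up c l) = LL M s c := by
  ext i
  simp only [mem_LL, up_apply]
  split_ifs with hi
  · subst hi; omega
  · rfl

lemma LL_mv {M : ℕ} {s : List PPerm} {c : ℕ → ℕ} {l l' : ℕ} (hne : l ≠ l') (h : M < c l)
    (h' : M ≤ c l') : LL M s (mv c l l') = LL M s c := by
  rw [mv, LL_up, LL_dn h]
  rw [dn_apply, if_neg hne.symm]; exact h'

lemma transfer_one {C : Set PPerm} {N d Q : ℕ} (S : Setup C N d Q) (hd : 0 < d)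
    {σ₁ σ₂ : Finset ℕ → ℕ} (hσ₁ : IsSel σ₁) (hσ₂ : IsSel σ₂) {r s : List PPerm} {a c : ℕ → ℕ}
    (hr : ∀ x ∈ r, NT x) (hs : ∀ x ∈ s, NT x)
    (hJ : (LL (Q + 1) r a).card = d)
    (hne : σ₁ (LL (Q + 1) r a) ≠ σ₂ (LL (Q + 1) r a))
    (ha : Q + 1 < a (σ₁ (LL (Q + 1) r a)))
    (hC : ev s c ∈ C) (hle : PatternLE (ev r a) (ev s c)) :
    σ₁ (LL N s c) ≠ σ₂ (LL N s c) ∧ N < c (σ₁ (LL N s c)) ∧ N ≤ c (σ₂ (LL N s c)) ∧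
    ev s (mv c (σ₁ (LL N s c)) (σ₂ (LL N s c))) ∈ C ∧
    (ev s (mv c (σ₁ (LL N s c)) (σ₂ (LL N s c)))).1 = (ev s c).1 ∧
    PatternLE (ev r (mv a (σ₁ (LL (Q + 1) r a)) (σ₂ (LL (Q + 1) r a))))
      (ev s (mv c (σ₁ (LL N s c)) (σ₂ (LL N s c)))) := by
  obtain ⟨g, hg⟩ := (patternLE_iff _ _).mp hle
  have hQ := S.size_le s c hs hC
  have hLd := S.card_le s c hs hC
  obtain ⟨k1, φ, k2, k3⟩ := key_sel hr hs hQ hg hd hJ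
    ((Finset.card_le_card (LL_anti (Nat.le_succ N) s c)).trans hLd)
  have hLL : LL (N + 1) s c = LL N s c :=
    Finset.eq_of_subset_of_card_le (LL_anti (Nat.le_succ N) s c) (by omega)
  rw [hLL] at k1 k3
  have hJne : (LL (Q + 1) r a).Nonempty := by rw [← Finset.card_pos]; omega
  have hLne : (LL N s c).Nonempty := by rw [← Finset.card_pos]; omega
  obtain ⟨e1, x1, i1, i1'⟩ := k3 σ₁ hσ₁
  obtain ⟨e2, x2, i2, i2'⟩ := k3 σ₂ hσ₂
  have hneL : σ₁ (LL N s c) ≠ σ₂ (LL N s c) := by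
    rw [e1, e2]
    intro hh
    exact hne (k2.injOn (hσ₁.1 _ hJne) (hσ₂.1 _ hJne) hh)
  have m1 : N < c (σ₁ (LL N s c)) := by
    have := hσ₁.1 _ hLne
    rw [← hLL, mem_LL] at this
    rw [← hLL]
    omega
  have m2 : N ≤ c (σ₂ (LL N s c)) := (mem_LL.mp (hσ₂.1 _ hLne)).2
  obtain ⟨_, hdn⟩ := emb_up_dn hg i1 i1'
  obtain ⟨g', hg'⟩ := (patternLE_iff _ _).mp hdn
  have hJ' : LL (Q + 1) r (dn a (σ₁ (LL (Q + 1) r a))) = LL (Q + 1) r a := LL_dn ha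
  have hL' : LL N s (dn c (σ₁ (LL N s c))) = LL N s c := LL_dn m1
  have hQN : sz s + (s.length + 1) * N ≤ Q :=
    le_trans (by gcongr; omega) hQ
  obtain ⟨_, φ', _, k3'⟩ := key_sel hr hs hQN hg' hd (by rw [hJ', hJ]) (by rw [hL']; exact hLd)
  rw [hJ', hL'] at k3'
  obtain ⟨_, x3, i3, i3'⟩ := k3' σ₂ hσ₂
  obtain ⟨hup, _⟩ := emb_up_dn hg' i3 i3'
  refine ⟨hneL, m1, m2, ?_, ?_, hup⟩
  · refine S.cap s c _ hs ?_ hC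
    intro i _
    rw [mv_apply c hneL]
    split_ifs with h1 h2
    · subst h1; omega
    · subst h2; omega
    · rfl
  · have f1 := ev_dn_fst i1'
    have f2 := ev_up_fst i3'
    rw [mv, f2, f1]

/-- all permutations of `C` of given size containing `α` -/
def Cont (C : Set PPerm) (α : PPerm) (n : ℕ) : Set PPerm :=
  {τ | τ ∈ C ∧ τ.1 = n ∧ PatternLE α τ}

lemma finite_size (n : ℕ) : {τ : PPerm | τ.1 = n}.Finite := by
  refine Set.Finite.subset (Set.finite_range (fun p : Equiv.Perm (Fin n) => (⟨n, p⟩ : PPerm))) ?_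
  rintro ⟨m, p⟩ h
  simp only [Set.mem_ofPred_eq] at h
  subst h
  exact ⟨p, rfl⟩

lemma finite_sub {P : PPerm → Prop} (n : ℕ) (h : ∀ τ, P τ → τ.1 = n) : {τ | P τ}.Finite :=
  (finite_size n).subset fun τ hτ => h τ hτ

lemma transfer {C : Set PPerm} {N d Q : ℕ} (S : Setup C N d Q) (hd : 0 < d)
    {σ₁ σ₂ : Finset ℕ → ℕ} (hσ₁ : IsSel σ₁) (hσ₂ : IsSel σ₂) {r : List PPerm} {a : ℕ → ℕ}
    (hr : ∀ x ∈ r, NT x) (hJ : (LL (Q + 1) r a).card = d)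
    (hne : σ₁ (LL (Q + 1) r a) ≠ σ₂ (LL (Q + 1) r a))
    (ha : Q + 1 < a (σ₁ (LL (Q + 1) r a))) (n : ℕ) :
    (Cont C (ev r a) n).ncard ≤
      (Cont C (ev r (mv a (σ₁ (LL (Q + 1) r a)) (σ₂ (LL (Q + 1) r a)))) n).ncard := by
  choose sk co hNT hev _ using exists_rep
  have T : ∀ τ ∈ Cont C (ev r a) n, _ := fun τ hτ =>
    transfer_one S hd hσ₁ hσ₂ hr (hNT τ) hJ hne ha (c := co τ)
      (by rw [← hev τ]; exact hτ.1) (by rw [← hev τ]; exact hτ.2.2)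
  refine Set.ncard_le_ncard_of_injOn
    (fun τ => ev (sk τ) (mv (co τ) (σ₁ (LL N (sk τ) (co τ))) (σ₂ (LL N (sk τ) (co τ))))) ?_ ?_
    (finite_sub n fun τ h => h.2.1)
  · intro τ hτ
    obtain ⟨_, _, _, h4, h5, h6⟩ := T τ hτ
    refine ⟨h4, ?_, h6⟩
    rw [h5, ← hev τ]; exact hτ.2.1
  · intro τ hτ τ' hτ' he
    obtain ⟨h1, h2, h3, _⟩ := T τ hτ
    obtain ⟨h1', h2', h3', _⟩ := T τ' hτ'
    obtain ⟨e1, e2⟩ := ev_inj _ _ _ _ (hNT τ) (hNT τ') he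
    rw [← e1] at h1' h2' h3'
    rw [← e1] at e2
    have hL := LL_congr (M := N) e2
    rw [LL_mv h1 h2 h3, LL_mv h1' h2' h3'] at hL
    rw [hev τ, hev τ', ← e1]
    apply ev_congr
    intro i hi
    have := e2 i hi
    rw [mv_apply _ h1, mv_apply _ h1', ← hL] at this
    rw [← hL] at h2'
    split_ifs at this with q1 q2
    · rw [← q1] at h2 h2'
      omega
    · omega
    · exact this

lemma avcnt_add (C : Set PPerm) (α : PPerm) (n : ℕ) :
    avcnt C α n + (Cont C α n).ncard = cnt C n := by
  unfold avcnt cnt Cont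
  rw [← Set.ncard_union_eq _ (finite_sub n fun τ h => h.2.1) (finite_sub n fun τ h => h.2.1)]
  · congr 1
    ext τ
    simp only [Set.mem_union, Set.mem_ofPred_eq]
    tauto
  · rw [Set.disjoint_left]
    rintro τ ⟨_, _, h⟩ ⟨_, _, h'⟩
    exact h h'

lemma wilf_of_cont {C : Set PPerm} {α β : PPerm}
    (h : ∀ n, (Cont C α n).ncard = (Cont C β n).ncard) : WilfEq C α β := by
  intro n
  have h1 := avcnt_add C α n
  have h2 := avcnt_add C β n
  have := h n
  omega

lemma mv_mv {c : ℕ → ℕ} {l l' : ℕ} (hne : l ≠ l') (h : 0 < c l) : mv (mv c l l') l' l = c := by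
  funext i
  rw [mv_apply _ hne.symm, mv_apply _ hne]
  split_ifs with h1 h2 h3
  · omega
  · omega
  · subst h3; omega
  · rfl

lemma exists_inRun {s : List PPerm} {c : ℕ → ℕ} {l : ℕ} (h : l ≤ s.length) (h0 : 0 < c l) :
    ∃ x, InRun s c l x := by
  obtain ⟨b, hb⟩ := inRun_ico s c l h
  exact ⟨b, (hb b).mpr (by omega)⟩

lemma wilf_step {C : Set PPerm} {N d Q : ℕ} (S : Setup C N d Q) (hd : 2 ≤ d)
    {r : List PPerm} {a : ℕ → ℕ} (hr : ∀ x ∈ r, NT x) (hC : ev r a ∈ C)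
    (hJ : (LL (Q + 1) r a).card = d)
    (ha : Q + 1 < a (hi (LL (Q + 1) r a))) :
    ∃ a' : ℕ → ℕ, ev r a' ∈ C ∧ (ev r a').1 = (ev r a).1 ∧ WilfEq C (ev r a) (ev r a') ∧
      LL (Q + 1) r a' = LL (Q + 1) r a ∧
      a' (hi (LL (Q + 1) r a)) + 1 = a (hi (LL (Q + 1) r a)) ∧
      ∀ i, r.length < i → a' i = a i := by
  have hne := lo_ne_hi (J := LL (Q + 1) r a) (by omega)
  have hJne : (LL (Q + 1) r a).Nonempty := by rw [← Finset.card_pos]; omega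
  have ml := mem_LL.mp (isSel_lo.1 _ hJne)
  have mh := mem_LL.mp (isSel_hi.1 _ hJne)
  have hNQ : N ≤ Q := by
    have := S.size_le r a hr hC
    nlinarith
  have hLL := LL_mv (M := Q + 1) (s := r) hne.symm ha ml.2
  have hback := mv_mv hne.symm (c := a) (by omega)
  have va := mv_apply a hne.symm
  generalize hlo : lo (LL (Q + 1) r a) = l at *
  generalize hhi : hi (LL (Q + 1) r a) = h at *
  refine ⟨mv a h l, ?_, ?_, ?_, hLL, ?_, ?_⟩
  · refine S.cap r a _ hr ?_ hC
    intro i _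
    rw [va]
    split_ifs with h1 h2
    · subst h1; omega
    · subst h2; omega
    · rfl
  · obtain ⟨x, hx⟩ := exists_inRun mh.1 (c := a) (by omega)
    have hdl : dn a h l = a l := by rw [dn_apply, if_neg hne]
    obtain ⟨y, hy⟩ := exists_inRun ml.1 (c := dn a h) (l := l) (by omega)
    have f1 := ev_dn_fst hx
    have f2 := ev_up_fst hy
    rw [mv]; omega
  · apply wilf_of_cont
    intro n
    apply le_antisymm
    · have := transfer S (by omega) isSel_hi isSel_lo hr hJ (by rw [hlo, hhi]; exact hne.symm)
        (by rw [hhi]; exact ha) n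
      rwa [hlo, hhi] at this
    · have := transfer S (by omega) isSel_lo isSel_hi hr (a := mv a h l) (by rw [hLL, hJ])
        (by rw [hLL, hlo, hhi]; exact hne)
        (by rw [hLL, hlo, va, if_neg hne, if_pos rfl]; omega) n
      rwa [hLL, hlo, hhi, hback] at this
  · rw [va, if_pos rfl]; omega
  · intro i hi
    rw [va, if_neg (by omega), if_neg (by omega)]

lemma wilf_reduce {C : Set PPerm} {N d Q : ℕ} (S : Setup C N d Q) (hd : 2 ≤ d)
    {r : List PPerm} (hr : ∀ x ∈ r, NT x) :
    ∀ (t : ℕ) (a : ℕ → ℕ), ev r a ∈ C → (∀ i, r.length < i → a i = 0) →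
      a (hi (LL (Q + 1) r a)) = t →
      ∃ b : ℕ → ℕ, ev r b ∈ C ∧ (ev r b).1 = (ev r a).1 ∧ WilfEq C (ev r a) (ev r b) ∧
        (∀ i, r.length < i → b i = 0) ∧ (LL (Q + 2) r b).card ≤ d - 1 := by
  intro t
  induction t with
  | zero =>
    intro a hC h0 ha
    refine ⟨a, hC, rfl, fun n => rfl, h0, ?_⟩
    have : LL (Q + 1) r a = ∅ := by
      by_contra hne
      have := mem_LL.mp (isSel_hi.1 _ (Finset.nonempty_iff_ne_empty.mpr hne))
      omega
    have h2 := LL_anti (show Q + 1 ≤ Q + 2 by omega) r a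
    rw [this] at h2
    have := Finset.card_le_card h2
    simp at this
    simp [this]
  | succ t ih =>
    intro a hC h0 ha
    by_cases hc : (LL (Q + 2) r a).card ≤ d - 1
    · exact ⟨a, hC, rfl, fun n => rfl, h0, hc⟩
    have hNQ : N ≤ Q := by
      have := S.size_le r a hr hC
      nlinarith
    have c1 := Finset.card_le_card (LL_anti (show Q + 1 ≤ Q + 2 by omega) r a)
    have c2 := Finset.card_le_card (LL_anti (show N ≤ Q + 1 by omega) r a)
    have c3 := S.card_le r a hr hC
    have heq : LL (Q + 2) r a = LL (Q + 1) r a :=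
      Finset.eq_of_subset_of_card_le (LL_anti (by omega) r a) (by omega)
    have hJne : (LL (Q + 2) r a).Nonempty := by rw [← Finset.card_pos]; omega
    have mh := mem_LL.mp (isSel_hi.1 _ hJne)
    rw [heq] at mh
    obtain ⟨a', g1, g2, g3, g4, g5, g6⟩ := wilf_step S hd hr hC (by omega) (by omega)
    obtain ⟨b, b1, b2, b3, b4, b5⟩ := ih a' g1 (fun i hi => by rw [g6 i hi, h0 i hi])
      (by rw [g4]; omega)
    exact ⟨b, b1, b2.trans g2, fun n => (g3 n).trans (b3 n), b4, b5⟩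

end WC


namespace WC

lemma count_le (s : List PPerm) (T n e : ℕ) (f : ℕ → ℕ)
    (he : ((Finset.range (s.length + 1)).filter (fun i => f i = T)).card ≤ e) :
    {τ : PPerm | ∃ a : ℕ → ℕ, τ = ev s a ∧ τ.1 = n ∧
      ∀ i ≤ s.length, min (a i) T = f i}.ncard ≤ (n + 1) ^ (e - 1) := by
  set J := (Finset.range (s.length + 1)).filter (fun i => f i = T) with hJ
  set J' := J.erase (lo J) with hJ'
  have hJ'c : J'.card ≤ e - 1 := by
    by_cases h : J.Nonempty
    · rw [hJ', Finset.card_erase_of_mem (isSel_lo.1 _ h)]; omega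
    · rw [Finset.not_nonempty_iff_eq_empty] at h
      simp [hJ', h]
  set X := {τ : PPerm | ∃ a : ℕ → ℕ, τ = ev s a ∧ τ.1 = n ∧
      ∀ i ≤ s.length, min (a i) T = f i} with hX
  have hex : ∀ τ ∈ X, ∃ a : ℕ → ℕ, τ = ev s a ∧ τ.1 = n ∧ ∀ i ≤ s.length, min (a i) T = f i :=
    fun τ h => h
  choose! a h1 h2 h3 using hex
  have hsum : ∀ τ ∈ X, (∑ i ∈ Finset.range (s.length + 1), a τ i) + sz s = n := by
    intro τ hτ
    rw [← ev_fst, ← h1 τ hτ, h2 τ hτ]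
  have hloJ : lo J ∈ Finset.range (s.length + 1) := by
    by_cases h : J.Nonempty
    · exact (Finset.mem_filter.mp (isSel_lo.1 _ h)).1
    · simp [lo, h]
  have hle : ∀ τ ∈ X, ∀ i ∈ J', a τ i < n + 1 := by
    intro τ hτ i hi
    have hi' : i ∈ Finset.range (s.length + 1) :=
      (Finset.mem_filter.mp (Finset.mem_of_mem_erase hi)).1
    have := Finset.single_le_sum (f := a τ) (fun _ _ => Nat.zero_le _) hi'
    have := hsum τ hτ
    omega
  have key : X.ncard ≤ (Set.univ : Set (J' → Fin (n + 1))).ncard := by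
    refine Set.ncard_le_ncard_of_injOn
      (fun τ => fun i : J' => Fin.ofNat (n + 1) (a τ i)) (fun _ _ => Set.mem_univ _) ?_
      Set.finite_univ
    intro τ hτ τ' hτ' heq
    have e1 : ∀ i ∈ J', a τ i = a τ' i := by
      intro i hi
      have := congrArg Fin.val (congrFun heq ⟨i, hi⟩)
      simp only [Fin.val_ofNat] at this
      rwa [Nat.mod_eq_of_lt (hle τ hτ i hi), Nat.mod_eq_of_lt (hle τ' hτ' i hi)] at this
    have e2 : ∀ i ∈ (Finset.range (s.length + 1)).erase (lo J), a τ i = a τ' i := by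
      intro i hi
      rw [Finset.mem_erase] at hi
      by_cases hiJ : i ∈ J
      · exact e1 i (Finset.mem_erase.mpr ⟨hi.1, hiJ⟩)
      · have hfi : f i ≠ T := by
          intro hf
          exact hiJ (Finset.mem_filter.mpr ⟨hi.2, hf⟩)
        have hil : i ≤ s.length := by have := Finset.mem_range.mp hi.2; omega
        have g1 := h3 τ hτ i hil
        have g2 := h3 τ' hτ' i hil
        omega
    have e3 : a τ (lo J) = a τ' (lo J) := by
      have s1 := hsum τ hτ
      have s2 := hsum τ' hτ'
      have s1' := Finset.sum_erase_add _ (a τ) hloJ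
      have s2' := Finset.sum_erase_add _ (a τ') hloJ
      have s3 := Finset.sum_congr (rfl : (Finset.range (s.length + 1)).erase (lo J) = _) e2
      linarith
    rw [h1 τ hτ, h1 τ' hτ']
    apply ev_congr
    intro i hi
    by_cases hil : i = lo J
    · rw [hil, e3]
    · exact e2 i (Finset.mem_erase.mpr ⟨hil, Finset.mem_range.mpr (by omega)⟩)
  refine key.trans ?_
  rw [Set.ncard_univ, Nat.card_eq_fintype_card, Fintype.card_fun, Fintype.card_fin,
    Fintype.card_coe]
  exact Nat.pow_le_pow_right (by omega) hJ'c

lemma cube_le {C : Set PPerm} {s : List PPerm} (hs : ∀ x ∈ s, NT x) {I : Finset ℕ} {d : ℕ}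
    (hI : I ⊆ Finset.range (s.length + 1)) (hd : I.card = d) (hd0 : 0 < d)
    (hC : ∀ c : ℕ → ℕ, (∀ i, i ∉ I → c i = 0) → ev s c ∈ C) (n m : ℕ)
    (hn : sz s + d * m ≤ n) : m ^ (d - 1) ≤ cnt C n := by
  classical
  obtain ⟨j, hj⟩ : I.Nonempty := by rw [← Finset.card_pos]; omega
  set I' := I.erase j with hI'
  have hI'c : I'.card = d - 1 := by rw [hI', Finset.card_erase_of_mem hj, hd]
  have hjI' : j ∉ I' := Finset.notMem_erase j I
  let c : (I' → Fin m) → ℕ → ℕ := fun φ i =>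
    if h : i ∈ I' then (φ ⟨i, h⟩).val
    else if i = j then n - sz s - ∑ x : I', (φ x).val else 0
  have hc0 : ∀ φ i, i ∉ I → c φ i = 0 := by
    intro φ i hi
    have h1 : i ∉ I' := fun h => hi (Finset.mem_of_mem_erase h)
    have h2 : i ≠ j := fun h => hi (h ▸ hj)
    simp [c, h1, h2]
  have hcI : ∀ φ (x : I'), c φ x = φ x := by
    intro φ x
    simp [c, x.2]
  have hcj : ∀ φ, c φ j = n - sz s - ∑ x : I', (φ x).val := by
    intro φ
    simp [c, hjI']
  have hbound : ∀ φ : I' → Fin m, ∑ x : I', (φ x).val ≤ d * m := by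
    intro φ
    calc ∑ x : I', (φ x).val ≤ ∑ x : I', m := Finset.sum_le_sum fun x _ => (φ x).isLt.le
      _ = (d - 1) * m := by simp [hI'c]
      _ ≤ d * m := Nat.mul_le_mul_right _ (by omega)
  have hsize : ∀ φ, (ev s (c φ)).1 = n := by
    intro φ
    rw [ev_fst, ← Finset.sum_subset hI (fun i _ hi => hc0 φ i hi), ← Finset.sum_erase_add _ _ hj,
      ← hI', ← Finset.sum_coe_sort I' (c φ), hcj]
    simp only [hcI]
    have := hbound φ
    omega
  have hinj : Function.Injective (fun φ => ev s (c φ)) := by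
    intro φ ψ h
    obtain ⟨_, h2⟩ := ev_inj s s _ _ hs hs h
    funext x
    apply Fin.ext
    rw [← hcI, ← hcI]
    apply h2
    have := Finset.mem_range.mp (hI (Finset.mem_of_mem_erase x.2))
    omega
  have : (Set.univ : Set (I' → Fin m)).ncard ≤ {τ : PPerm | τ ∈ C ∧ τ.1 = n}.ncard := by
    refine Set.ncard_le_ncard_of_injOn (fun φ => ev s (c φ)) ?_ hinj.injOn
      (finite_sub n fun τ h => h.2)
    intro φ _
    exact ⟨hC _ (hc0 φ), hsize φ⟩
  rw [Set.ncard_univ, Nat.card_eq_fintype_card, Fintype.card_fun, Fintype.card_fin,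
    Fintype.card_coe, hI'c] at this
  exact this

/-- the permutation 21 -/
def p21 : PPerm := ⟨2, Equiv.swap 0 1⟩

lemma p21_zero : pv p21 0 = 1 := by
  rw [pv_of_lt p21 (i := 0) (by simp [p21])]
  rfl

lemma p21_one : pv p21 1 = 0 := by
  rw [pv_of_lt p21 (i := 1) (by simp [p21])]
  rfl

lemma NT_p21 : NT p21 := by
  refine ⟨⟨by simp [p21], ?_⟩, by simp [p21]⟩
  rintro ⟨α, β, ha, hb, h⟩
  have h1 : p21.1 = α.1 + β.1 := congrArg (fun x : PPerm => x.1) h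
  have h2 : pv p21 0 = pv (psum α β) 0 := congrArg (fun x : PPerm => pv x 0) h
  have h3 : p21.1 = 2 := rfl
  rw [p21_zero, pv_psum_lt _ _ ha] at h2
  have := pv_lt α ha
  omega

lemma p21_le {x : PPerm} (hx : NT x) : PatternLE p21 x := by
  obtain ⟨i, j, h1, h2, h3⟩ := NT_inv hx
  rw [patternLE_iff]
  have h4 : p21.1 = 2 := rfl
  refine ⟨fun k => if k = 0 then i else j, ?_, ?_, ?_⟩
  · intro a b hab hb
    have : a = 0 := by omega
    have : b = 1 := by omega
    subst_vars
    simpa using h1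
  · intro a ha
    dsimp only
    split_ifs <;> omega
  · intro a b ha hb
    have ha : a = 0 ∨ a = 1 := by omega
    have hb : b = 0 ∨ b = 1 := by omega
    rcases ha with rfl | rfl <;> rcases hb with rfl | rfl <;> simp [p21_zero, p21_one] <;> omega

lemma one_le {x : PPerm} (hx : 0 < x.1) : PatternLE (inc 1) x := by
  rw [patternLE_iff]
  refine ⟨fun _ => 0, ?_, fun _ _ => hx, ?_⟩
  · intro i j hij hj
    simp at hj; omega
  · intro i j hi hj
    simp at hi hj
    simp [hi, hj]

/-- sum of a list of permutations -/
def fs (l : List PPerm) : PPerm := l.foldr psum (inc 0)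

lemma fs_append (u v : List PPerm) : fs (u ++ v) = psum (fs u) (fs v) := by
  induction u with
  | nil => simp [fs, inc_zero_psum]
  | cons x u ih =>
    change psum x (fs (u ++ v)) = psum (psum x (fs u)) (fs v)
    rw [ih, psum_assoc]

lemma inc_fs (n : ℕ) : inc n = fs (List.replicate n (inc 1)) := by
  induction n with
  | zero => rfl
  | succ n ih =>
    rw [List.replicate_succ]
    change _ = psum (inc 1) (fs _)
    rw [← ih, ← inc_add, Nat.add_comm]

lemma ev_fs : ∀ (k : ℕ) (c : ℕ → ℕ), ∃ w : List PPerm, (∀ x ∈ w, x = inc 1 ∨ x = p21) ∧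
    ev (List.replicate k p21) c = fs w
  | 0, c => ⟨List.replicate (c 0) (inc 1), fun x hx => Or.inl (List.eq_of_mem_replicate hx),
      inc_fs _⟩
  | k + 1, c => by
    obtain ⟨w, h1, h2⟩ := ev_fs k (sh c)
    refine ⟨List.replicate (c 0) (inc 1) ++ (p21 :: w), ?_, ?_⟩
    · intro x hx
      rcases List.mem_append.mp hx with h | h
      · exact Or.inl (List.eq_of_mem_replicate h)
      · rcases List.mem_cons.mp h with h | h
        · exact Or.inr h
        · exact h1 x h
    · rw [fs_append, ← inc_fs, List.replicate_succ]
      simp only [ev, h2]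
      rfl

lemma fs_le : ∀ (w s : List PPerm) (b : ℕ → ℕ), (∀ x ∈ w, x = inc 1 ∨ x = p21) →
    (∀ x ∈ s, NT x) → w.length ≤ s.length → PatternLE (fs w) (ev s b)
  | [], s, b, _, _, _ => ple_zero _
  | x :: w, [], b, _, _, h => by simp at h
  | x :: w, y :: s, b, hw, hs, h => by
    have hy := hs y (by simp)
    have h1 : PatternLE x y := by
      rcases hw x (by simp) with rfl | rfl
      · exact one_le hy.1.1
      · exact p21_le hy
    have h2 := fs_le w s (sh b) (fun z hz => hw z (by simp [hz])) (fun z hz => hs z (by simp [hz]))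
      (by simpa using h)
    exact ple_trans (ple_psum h1 h2) (ple_psum_right _ _)

lemma exists_K {C : Set PPerm} (hclass : IsPermClass C) (D : ℕ) (hD : 0 < D)
    (hO : (fun n => (cnt C n : ℝ)) =O[atTop] fun n => (n : ℝ) ^ (D - 1)) :
    ∃ K, ∀ s c, (∀ x ∈ s, NT x) → ev s c ∈ C → s.length ≤ K := by
  by_contra hcon
  push Not at hcon
  have hall : ∀ k c, ev (List.replicate k p21) c ∈ C := by
    intro k c
    obtain ⟨w, h1, h2⟩ := ev_fs k c
    obtain ⟨s, b, hs, hb, hl⟩ := hcon w.length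
    rw [h2]
    exact hclass _ _ (fs_le w s b h1 hs hl.le) hb
  have hcube : ∀ n m, sz (List.replicate D p21) + (D + 1) * m ≤ n → m ^ D ≤ cnt C n := by
    intro n m h
    have := cube_le (C := C) (s := List.replicate D p21)
      (fun x hx => by rw [List.eq_of_mem_replicate hx]; exact NT_p21)
      (I := Finset.range (D + 1)) (d := D + 1) (by simp) (by simp) (by omega)
      (fun c _ => hall D c) n m h
    simpa using this
  obtain ⟨A, hA⟩ := hO.bound
  obtain ⟨n0, hn0⟩ := eventually_atTop.mp hA
  set B := sz (List.replicate D p21) with hB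
  obtain ⟨m, hm⟩ := exists_nat_gt (max (max (n0 : ℝ) 1) (A * ((B + (D + 1) : ℕ) : ℝ) ^ (D - 1)))
  have hm1 : (n0 : ℝ) < m := lt_of_le_of_lt ((le_max_left _ _).trans (le_max_left _ _)) hm
  have hm2 : (1 : ℝ) < m := lt_of_le_of_lt ((le_max_right _ _).trans (le_max_left _ _)) hm
  have hm3 := lt_of_le_of_lt (le_max_right _ _) hm
  have hm1' : n0 < m := by exact_mod_cast hm1
  have hm2' : 1 < m := by exact_mod_cast hm2
  have h1 := hcube (B + (D + 1) * m) m le_rfl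
  have h2 := hn0 (B + (D + 1) * m) (by nlinarith)
  simp only [Real.norm_natCast, norm_pow] at h2
  have h3 : ((m : ℝ)) ^ D ≤ A * ((B + (D + 1) * m : ℕ) : ℝ) ^ (D - 1) := by
    refine le_trans ?_ h2
    exact_mod_cast h1
  have hA0 : 0 ≤ A := by
    by_contra hneg
    have p1 : (0 : ℝ) < (m : ℝ) ^ D := by positivity
    have p2 : (0 : ℝ) ≤ ((B + (D + 1) * m : ℕ) : ℝ) ^ (D - 1) := by positivity
    nlinarith
  have h4 : ((B + (D + 1) * m : ℕ) : ℝ) ≤ ((B + (D + 1) : ℕ) : ℝ) * m := by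
    have : B + (D + 1) * m ≤ (B + (D + 1)) * m := by nlinarith
    exact_mod_cast this
  have h5 : ((B + (D + 1) * m : ℕ) : ℝ) ^ (D - 1) ≤ ((B + (D + 1) : ℕ) : ℝ) ^ (D - 1) *
      (m : ℝ) ^ (D - 1) := by
    rw [← mul_pow]
    exact pow_le_pow_left₀ (by positivity) h4 _
  have h6 : (m : ℝ) ^ D = m * (m : ℝ) ^ (D - 1) := by
    rw [← pow_succ']; congr 1; omega
  have h7 : (0 : ℝ) < (m : ℝ) ^ (D - 1) := by positivity
  have h8 := mul_le_mul_of_nonneg_left h5 hA0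
  rw [h6] at h3
  have h9 : (m : ℝ) * (m : ℝ) ^ (D - 1) ≤
      (A * ((B + (D + 1) : ℕ) : ℝ) ^ (D - 1)) * (m : ℝ) ^ (D - 1) := by
    linarith
  have := le_of_mul_le_mul_right h9 h7
  linarith

lemma cap_exists {k : ℕ} (U : Set (Fin k → ℕ)) (hU : ∀ c c', c' ≤ c → c ∈ U → c' ∈ U) :
    ∃ N, ∀ c c' : Fin k → ℕ, (∀ i, min (c i) N = min (c' i) N) → c ∈ U → c' ∈ U := by
  have hanti : {m : Fin k → ℕ | Minimal (fun c => c ∉ U) m}.Finite :=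
    WellQuasiOrderedLE.finite_of_isAntichain (setOfPred_minimal_antichain _)
  refine ⟨hanti.toFinset.sup (fun m => Finset.univ.sup m), ?_⟩
  intro c c' hcc hc
  by_contra hc'
  obtain ⟨m, hm, hmin⟩ := exists_minimal_le_of_wellFoundedLT (fun c => c ∉ U) c' hc'
  refine hmin.1 (hU c m ?_ hc)
  intro i
  have h1 : m i ≤ hanti.toFinset.sup (fun m => Finset.univ.sup m) :=
    (Finset.le_sup (f := m) (Finset.mem_univ i)).trans
      (Finset.le_sup (f := fun m : Fin k → ℕ => Finset.univ.sup m) (hanti.mem_toFinset.mpr hmin))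
  have h2 : m i ≤ c' i := hm i
  have h3 := hcc i
  change m i ≤ c i
  generalize hanti.toFinset.sup (fun m => Finset.univ.sup m) = NN at h1 h3
  omega

/-- the possible skeletons -/
def Sk (C : Set PPerm) (K : ℕ) : Set (List PPerm) :=
  {s | s.length ≤ K ∧ ∀ x ∈ s, x ∈ C ∧ NT x}

lemma Sk_finite {C : Set PPerm} (hfin : {π : PPerm | π ∈ C ∧ SumIndec π}.Finite) (K : ℕ) :
    (Sk C K).Finite := by
  have : Finite {π : PPerm | π ∈ C ∧ SumIndec π} := hfin
  refine ((List.finite_length_le {π : PPerm | π ∈ C ∧ SumIndec π} K).image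
    (List.map Subtype.val)).subset ?_
  rintro s ⟨h1, h2⟩
  refine ⟨s.attach.map (fun x => ⟨x.1, (h2 x.1 x.2).1, (h2 x.1 x.2).2.1⟩), ?_, ?_⟩
  · change (List.map _ s.attach).length ≤ K
    simpa using h1
  · simp

lemma mem_Sk {C : Set PPerm} (hclass : IsPermClass C) {K : ℕ}
    (hK : ∀ s c, (∀ x ∈ s, NT x) → ev s c ∈ C → s.length ≤ K) {s : List PPerm} {c : ℕ → ℕ}
    (hs : ∀ x ∈ s, NT x) (h : ev s c ∈ C) : s ∈ Sk C K :=
  ⟨hK s c hs h, fun x hx => ⟨hclass _ _ (ev_mem s c x hx) h, hs x hx⟩⟩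

/-- extend by zero -/
def ext0 {k : ℕ} (f : Fin k → ℕ) : ℕ → ℕ := fun i => if h : i < k then f ⟨i, h⟩ else 0

lemma cap_one {C : Set PPerm} (hclass : IsPermClass C) (s : List PPerm) :
    ∃ N, ∀ c c', (∀ i ≤ s.length, min (c i) N = min (c' i) N) → ev s c ∈ C → ev s c' ∈ C := by
  obtain ⟨N, hN⟩ := cap_exists (k := s.length + 1) {f | ev s (ext0 f) ∈ C} (by
    intro c c' hle hc
    refine hclass _ _ (ev_mono s _ _ ?_) hc
    intro i hi
    simp only [ext0, show i < s.length + 1 by omega, dif_pos]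
    exact hle _)
  have e : ∀ c : ℕ → ℕ, ev s (ext0 (fun i : Fin (s.length + 1) => c i)) = ev s c := by
    intro c
    apply ev_congr
    intro i hi
    simp [ext0, show i < s.length + 1 by omega]
  refine ⟨N, fun c c' hcc hc => ?_⟩
  have := hN (fun i => c i) (fun i => c' i) (fun i => hcc i (by omega))
    (show ev s (ext0 _) ∈ C by rw [e]; exact hc)
  have h2 : ev s (ext0 _) ∈ C := this
  rwa [e] at h2

lemma exists_setup {C : Set PPerm} (hclass : IsPermClass C) {K : ℕ}
    (hK : ∀ s c, (∀ x ∈ s, NT x) → ev s c ∈ C → s.length ≤ K)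
    (hfin : (Sk C K).Finite) (hne : C.Nonempty) :
    ∃ N d Q, Setup C N d Q ∧ ∃ s c, (∀ x ∈ s, NT x) ∧ ev s c ∈ C ∧ (LL N s c).card = d := by
  choose n hn using cap_one hclass
  set N := hfin.toFinset.sup n with hNdef
  have hcap : ∀ s c c', (∀ x ∈ s, NT x) → (∀ i ≤ s.length, min (c i) N = min (c' i) N) →
      ev s c ∈ C → ev s c' ∈ C := by
    intro s c c' hs hcc hc
    have h1 : n s ≤ N := Finset.le_sup (hfin.mem_toFinset.mpr (mem_Sk hclass hK hs hc))
    refine hn s c c' (fun i hi => ?_) hc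
    have := hcc i hi
    omega
  have hbd : ∃ d, ∀ s c, (∀ x ∈ s, NT x) → ev s c ∈ C → (LL N s c).card ≤ d := by
    refine ⟨K + 1, fun s c hs hc => ?_⟩
    have h1 := Finset.card_filter_le (Finset.range (s.length + 1)) (fun l => N ≤ c l)
    have h2 := hK s c hs hc
    rw [Finset.card_range] at h1
    unfold LL
    omega
  classical
  set d := Nat.find hbd with hd
  have hd1 := Nat.find_spec hbd
  refine ⟨N, d, hfin.toFinset.sup sz + (K + 1) * (N + 1), ⟨hcap, hd1, ?_⟩, ?_⟩
  · intro s c hs hc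
    have h1 : sz s ≤ hfin.toFinset.sup sz :=
      Finset.le_sup (hfin.mem_toFinset.mpr (mem_Sk hclass hK hs hc))
    have h2 := hK s c hs hc
    gcongr
  · rcases Nat.eq_zero_or_pos d with h0 | hpos
    · obtain ⟨τ, hτ⟩ := hne
      obtain ⟨s, c, hs, rfl, _⟩ := exists_rep τ
      refine ⟨s, c, hs, hτ, ?_⟩
      have := hd1 s c hs hτ
      omega
    · have := Nat.find_min hbd (m := d - 1) (by omega)
      push Not at this
      obtain ⟨s, c, hs, hc, hlt⟩ := this
      have := hd1 s c hs hc
      exact ⟨s, c, hs, hc, by omega⟩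

lemma upper {C : Set PPerm} (hclass : IsPermClass C) {K : ℕ}
    (hK : ∀ s c, (∀ x ∈ s, NT x) → ev s c ∈ C → s.length ≤ K)
    (hfin : (Sk C K).Finite) (T e : ℕ) :
    ∃ A : ℕ, ∀ n, {τ : PPerm | τ ∈ C ∧ τ.1 = n ∧ ∃ s a, (∀ x ∈ s, NT x) ∧ τ = ev s a ∧
      (LL T s a).card ≤ e}.ncard ≤ A * (n + 1) ^ (e - 1) := by
  classical
  let F : Finset (List PPerm × (Fin (K + 1) → Fin (T + 1))) := hfin.toFinset ×ˢ Finset.univ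
  refine ⟨F.card, fun n => ?_⟩
  let fe : (Fin (K + 1) → Fin (T + 1)) → ℕ → ℕ := fun f => ext0 (fun i => (f i).val)
  let E : List PPerm × (Fin (K + 1) → Fin (T + 1)) → Set PPerm := fun p =>
    {τ | ((Finset.range (p.1.length + 1)).filter (fun i => fe p.2 i = T)).card ≤ e ∧
      ∃ a : ℕ → ℕ, τ = ev p.1 a ∧ τ.1 = n ∧ ∀ i ≤ p.1.length, min (a i) T = fe p.2 i}
  have hE : ∀ p ∈ F, (E p).ncard ≤ (n + 1) ^ (e - 1) := by
    intro p _
    by_cases h : ((Finset.range (p.1.length + 1)).filter (fun i => fe p.2 i = T)).card ≤ e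
    · refine le_trans (Set.ncard_le_ncard ?_ (finite_sub n ?_)) (count_le p.1 T n e (fe p.2) h)
      · rintro τ ⟨_, h2⟩
        exact h2
      · rintro τ ⟨a, _, h2, _⟩
        exact h2
    · have : E p = ∅ := by
        ext τ
        simp only [Set.mem_empty_iff_false, iff_false]
        rintro ⟨h1, _⟩
        exact h h1
      rw [this]; simp
  have hsub : {τ : PPerm | τ ∈ C ∧ τ.1 = n ∧ ∃ s a, (∀ x ∈ s, NT x) ∧ τ = ev s a ∧
      (LL T s a).card ≤ e} ⊆ ⋃ p ∈ F, E p := by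
    rintro τ ⟨h1, h2, s, a, hs, rfl, hc⟩
    have hsk := mem_Sk hclass hK hs h1
    have hlen := hsk.1
    simp only [Set.mem_iUnion]
    have hv : ∀ i ≤ s.length, fe (fun i => ⟨min (a i) T, by omega⟩) i = min (a i) T := by
      intro i hi
      simp [fe, ext0, show i < K + 1 by omega]
    refine ⟨(s, fun i => ⟨min (a i) T, by omega⟩), ?_, ?_, a, rfl, h2, ?_⟩
    · simp [F, hsk]
    · refine le_trans (le_of_eq ?_) hc
      congr 1
      ext i
      rw [mem_LL, Finset.mem_filter, Finset.mem_range]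
      constructor
      · rintro ⟨q1, q2⟩
        rw [hv i (by dsimp only at q1; omega)] at q2
        dsimp only at q1
        omega
      · rintro ⟨q1, q2⟩
        refine ⟨by dsimp only; omega, ?_⟩
        rw [hv i q1]
        omega
    · intro i hi
      rw [hv i hi]
  have hfinU : (⋃ p ∈ F, E p).Finite := by
    refine (finite_size n).subset ?_
    intro τ hτ
    simp only [Set.mem_iUnion] at hτ
    obtain ⟨p, _, _, a, _, h, _⟩ := hτ
    exact h
  calc _ ≤ (⋃ p ∈ F, E p).ncard := Set.ncard_le_ncard hsub hfinU
    _ ≤ ∑ p ∈ F, (E p).ncard := Finset.set_ncard_biUnion_le F E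
    _ ≤ ∑ p ∈ F, (n + 1) ^ (e - 1) := Finset.sum_le_sum hE
    _ = F.card * (n + 1) ^ (e - 1) := by simp

lemma wilf_symm_trans {C : Set PPerm} {α β : PPerm} (h : WilfEq C α β) (n : ℕ) :
    {γ : PPerm | γ ∈ C ∧ γ.1 = n ∧ WilfEq C α γ} = {γ : PPerm | γ ∈ C ∧ γ.1 = n ∧ WilfEq C β γ} := by
  ext γ
  constructor
  · rintro ⟨h1, h2, h3⟩
    exact ⟨h1, h2, fun k => (h k).symm.trans (h3 k)⟩
  · rintro ⟨h1, h2, h3⟩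
    exact ⟨h1, h2, fun k => (h k).trans (h3 k)⟩

lemma wilfcnt_le {C : Set PPerm} {N d Q : ℕ} (S : Setup C N d Q) (hd : 2 ≤ d) (n : ℕ) :
    wilfcnt C n ≤ {τ : PPerm | τ ∈ C ∧ τ.1 = n ∧ ∃ s a, (∀ x ∈ s, NT x) ∧ τ = ev s a ∧
      (LL (Q + 2) s a).card ≤ d - 1}.ncard := by
  set X := {τ : PPerm | τ ∈ C ∧ τ.1 = n ∧ ∃ s a, (∀ x ∈ s, NT x) ∧ τ = ev s a ∧
      (LL (Q + 2) s a).card ≤ d - 1} with hX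
  have hXf : X.Finite := finite_sub n fun τ h => h.2.1
  unfold wilfcnt
  refine le_trans (Set.ncard_le_ncard (t := (fun α : PPerm =>
    {β : PPerm | β ∈ C ∧ β.1 = n ∧ WilfEq C α β}) '' X) ?_ (hXf.image _)) (Set.ncard_image_le hXf)
  rintro _ ⟨α, hα, hn, rfl⟩
  obtain ⟨r, a, hr, rfl, h0⟩ := exists_rep α
  obtain ⟨b, b1, b2, b3, _, b5⟩ := wilf_reduce S hd hr _ a hα h0 rfl
  exact ⟨ev r b, ⟨b1, b2.trans hn, r, b, hr, rfl, b5⟩, (wilf_symm_trans b3 n).symm⟩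

lemma lower {C : Set PPerm} (hclass : IsPermClass C) {N d Q : ℕ} (S : Setup C N d Q) (hd : 0 < d)
    {s : List PPerm} {c : ℕ → ℕ} (hs : ∀ x ∈ s, NT x) (hc : ev s c ∈ C)
    (hcard : (LL N s c).card = d) (n m : ℕ) (hn : sz s + d * m ≤ n) :
    m ^ (d - 1) ≤ cnt C n := by
  refine cube_le hs (I := LL N s c) (Finset.filter_subset _ _) hcard hd ?_ n m hn
  intro c' hc'
  have h1 : ev s (fun i => if i ∈ LL N s c then c i + c' i else c i) ∈ C := by
    refine S.cap s c _ hs ?_ hc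
    intro i hi
    split_ifs with h
    · have := (mem_LL.mp h).2; omega
    · rfl
  refine hclass _ _ (ev_mono s _ _ ?_) h1
  intro i hi
  split_ifs with h
  · omega
  · rw [hc' i h]; omega

lemma final_asymp {w c : ℕ → ℕ} {A B d : ℕ} (hd : 2 ≤ d)
    (hw : ∀ n, w n ≤ A * (n + 1) ^ (d - 2))
    (hc : ∀ n m, B + d * m ≤ n → m ^ (d - 1) ≤ c n) :
    (fun n => (w n : ℝ)) =o[atTop] fun n => (c n : ℝ) := by
  have key : ∀ n, 2 * B + 2 * d ≤ n →
      w n * ((n + 1) / (2 * d)) ≤ A * (4 * d) ^ (d - 2) * c n := by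
    intro n hn
    set m := (n + 1) / (2 * d) with hm
    have h1 : 2 * d * m ≤ n + 1 := Nat.mul_div_le _ _
    have h2 : n + 1 < 2 * d * (m + 1) := by
      have := Nat.lt_div_mul_add (a := n + 1) (b := 2 * d) (by omega)
      rw [← hm] at this
      nlinarith
    have h3 : 1 ≤ m := by
      rw [hm, Nat.le_div_iff_mul_le (by omega)]; omega
    have h4 : n + 1 ≤ 4 * d * m := by nlinarith
    have h5 := hc n m (by
      have : 2 * (d * m) ≤ n + 1 := by rw [← mul_assoc]; exact h1
      omega)
    calc w n * m ≤ A * (n + 1) ^ (d - 2) * m := Nat.mul_le_mul_right _ (hw n)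
      _ ≤ A * (4 * d * m) ^ (d - 2) * m := by gcongr
      _ = A * (4 * d) ^ (d - 2) * m ^ (d - 1) := by
        rw [mul_pow, show d - 1 = (d - 2) + 1 by omega, pow_succ]; ring
      _ ≤ _ := by gcongr
  rw [isLittleO_iff]
  intro ε hε
  obtain ⟨M, hM⟩ := exists_nat_gt (((A * (4 * d) ^ (d - 2) : ℕ) : ℝ) / ε)
  filter_upwards [eventually_ge_atTop (2 * B + 2 * d + 2 * d * (M + 1))] with n hn
  have h1 := key n (by omega)
  set m := (n + 1) / (2 * d) with hm
  have hmM : M + 1 ≤ m := by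
    rw [hm, Nat.le_div_iff_mul_le (by omega)]
    have : (M + 1) * (2 * d) = 2 * d * (M + 1) := by ring
    omega
  have h2 : (w n : ℝ) * m ≤ ((A * (4 * d) ^ (d - 2) : ℕ) : ℝ) * c n := by exact_mod_cast h1
  have h3 : (M : ℝ) ≤ m := by
    have : M ≤ m := by omega
    exact_mod_cast this
  have h4 : ((A * (4 * d) ^ (d - 2) : ℕ) : ℝ) < ε * m := by
    rw [div_lt_iff₀ hε] at hM
    nlinarith
  have hm0 : (0 : ℝ) < m := by
    have : 0 < m := by omega
    exact_mod_cast this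
  simp only [Real.norm_natCast]
  have h5 : (w n : ℝ) * m ≤ (ε * c n) * m := by
    have : (0 : ℝ) ≤ c n := by positivity
    nlinarith
  exact le_of_mul_le_mul_right h5 hm0

theorem main (C : Set PPerm)
    (hclass : IsPermClass C)
    (hfin : {π : PPerm | π ∈ C ∧ SumIndec π}.Finite)
    (D : ℕ) (hD : 0 < D)
    (hΘ : (fun n => (cnt C n : ℝ)) =Θ[atTop] fun n => (n : ℝ) ^ (D - 1))
    (hunb : ¬ ∃ M : ℕ, ∀ n : ℕ, cnt C n ≤ M) :
    WilfCollapse C := by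
  obtain ⟨K, hK⟩ := exists_K hclass D hD hΘ.1
  have hSk := Sk_finite hfin K
  have hne : C.Nonempty := by
    by_contra h
    rw [Set.not_nonempty_iff_eq_empty] at h
    exact hunb ⟨0, fun n => by simp [cnt, h]⟩
  obtain ⟨N, d, Q, S, s, c, hs, hc, hcard⟩ := exists_setup hclass hK hSk hne
  have hd : 2 ≤ d := by
    by_contra hlt
    obtain ⟨A, hA⟩ := upper hclass hK hSk N d
    refine hunb ⟨A, fun n => ?_⟩
    have h1 := hA n
    rw [show d - 1 = 0 by omega, pow_zero, mul_one] at h1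
    refine le_trans (Set.ncard_le_ncard ?_ (finite_sub n fun τ h => h.2.1)) h1
    rintro τ ⟨h1, h2⟩
    obtain ⟨r, a, hr, rfl, _⟩ := exists_rep τ
    exact ⟨h1, h2, r, a, hr, rfl, S.card_le r a hr h1⟩
  obtain ⟨A, hA⟩ := upper hclass hK hSk (Q + 2) (d - 1)
  exact final_asymp (A := A) (B := sz s) hd
    (fun n => (wilfcnt_le S hd n).trans (by have := hA n; rwa [Nat.sub_sub] at this))
    (fun n m h => lower hclass S (by omega) hs hc hcard n m h)

end WC

/-- **Proposition `pro-poly`.**  Any *unbounded polynomial class* — a permutation class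
with finitely many sum-indecomposable permutations whose dominant growth rate `γ`
equals `1` (equivalently, `c_n = Θ(n^{D−1})` for some positive integer `D`) and whose
growth function is unbounded — exhibits a Wilf collapse. -/
theorem unboundedPolynomialClass_wilfCollapse (C : Set PPerm)
    (hclass : IsPermClass C)
    (hfin : {π : PPerm | π ∈ C ∧ SumIndec π}.Finite)
    (D : ℕ) (hD : 0 < D)
    (hΘ : (fun n => (cnt C n : ℝ)) =Θ[atTop] fun n => (n : ℝ) ^ (D - 1))
    (hunb : ¬ ∃ M : ℕ, ∀ n : ℕ, cnt C n ≤ M) :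
    WilfCollapse C := by
  exact WC.main C hclass hfin D hD hΘ hunb
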